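/- arXiv:1006.3237 — 8 statements merged into one kernel-verified Lean document; each statement's English description precedes it below -/
import Mathlib

section
/- Let F be a field and D a quaternion division algebra over F, i.e., a division ring that is a central F-algebra of dimension 4 over F. Let L be a field extension of F with [L:F] = 2. Then L splits D, i.e., the base change D ⊗_F L is isomorphic as an L-algebra to the algebra of 2×2 matrices over L, if and only if there exists an injective F-algebra homomorphism from L into D. -/
open TensorProduct

/-!
Let `A` be central simple over `F` of dimension `n ^ 2`, and let `[L : F] = n`. The bridge between
splittings and embeddings is a representation `A → Mₙ(L)`, that is, an `(A, L)`-bimodule of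
`L`-dimension `n`. Since `A` is central simple, the induced map `L ⊗ A → Mₙ(L)` is injective,
hence bijective by dimension. On the other hand, an embedding of `L` makes `A` itself such a
bimodule by right multiplication. Conversely, finite-dimensional `A`-modules are determined up to
isomorphism by their dimension, so such a bimodule is `A` as a left module, and `L` acts through
`End_A(A) = Aᵒᵖ`.
-/

section CentralSimple

variable {A R ι : Type*} [Ring A] [Ring R]

/-- The two-sided ideal of `A` formed by the coefficients at `j` in the `A`-linear relations,
supported on `s`, between the elements `v i` of a ring `R` to which `A` maps by `g`. It is
two-sided because the `v i` commute with the image of `g`. -/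
def relationCoeffIdeal (g : A →+* R) (v : ι → R) (hcomm : ∀ i a, Commute (g a) (v i))
    (s : Finset ι) (j : ι) : TwoSidedIdeal A :=
  .mk' {x | ∃ a : ι → A, ∑ i ∈ s, g (a i) * v i = 0 ∧ a j = x}
    ⟨0, by simp, rfl⟩
    (by
      rintro _ _ ⟨a, ha, rfl⟩ ⟨b, hb, rfl⟩
      exact ⟨a + b, by simp [add_mul, Finset.sum_add_distrib, ha, hb], rfl⟩)
    (by
      rintro _ ⟨a, ha, rfl⟩
      exact ⟨-a, by simp [ha], rfl⟩)
    (by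
      rintro x _ ⟨a, ha, rfl⟩
      exact ⟨fun i ↦ x * a i, by simp [mul_assoc, ← Finset.mul_sum, ha], rfl⟩)
    (by
      rintro _ x ⟨a, ha, rfl⟩
      refine ⟨fun i ↦ a i * x, ?_, rfl⟩
      simp only [map_mul, mul_assoc, (hcomm _ x).eq]
      simp only [← mul_assoc, ← Finset.sum_mul, ha, zero_mul])

theorem mem_relationCoeffIdeal {g : A →+* R} {v : ι → R} {hcomm : ∀ i a, Commute (g a) (v i)}
    {s : Finset ι} {j : ι} {x : A} :
    x ∈ relationCoeffIdeal g v hcomm s j ↔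
      ∃ a : ι → A, ∑ i ∈ s, g (a i) * v i = 0 ∧ a j = x :=
  TwoSidedIdeal.mem_mk' ..

theorem sum_commutator_mul_eq_zero {g : A →+* R} {v : ι → R}
    (hcomm : ∀ i a, Commute (g a) (v i)) {s : Finset ι} {a : ι → A}
    (ha : ∑ i ∈ s, g (a i) * v i = 0) (x : A) :
    ∑ i ∈ s, g (x * a i - a i * x) * v i = 0 := by
  calc ∑ i ∈ s, g (x * a i - a i * x) * v i
      = g x * ∑ i ∈ s, g (a i) * v i - (∑ i ∈ s, g (a i) * v i) * g x := by
        rw [Finset.mul_sum, Finset.sum_mul, ← Finset.sum_sub_distrib]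
        refine Finset.sum_congr rfl fun i _ ↦ ?_
        rw [map_sub, map_mul, map_mul, sub_mul, mul_assoc, mul_assoc, mul_assoc, (hcomm i x).eq]
    _ = 0 := by rw [ha, mul_zero, zero_mul, sub_zero]

variable {F : Type*} [Field F] [Algebra F A] [Algebra F R]

theorem eq_zero_of_sum_mul_eq_zero_of_forall_commute [Algebra.IsCentral F A] (g : A →ₐ[F] R)
    {v : ι → R} (hv : LinearIndependent F v) {s : Finset ι} {a : ι → A}
    (ha : ∑ i ∈ s, g (a i) * v i = 0) (hcentral : ∀ i ∈ s, ∀ x, Commute x (a i)) :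
    ∀ i ∈ s, a i = 0 := by
  have hscalar : ∀ i ∈ s, ∃ r : F, a i = algebraMap F A r := fun i hi ↦
    (Algebra.IsCentral.mem_center_iff F).1 <| Subalgebra.mem_center_iff.2 (hcentral i hi)
  choose! r hr using hscalar
  have hrelation : ∑ i ∈ s, r i • v i = 0 := by
    rw [← ha]
    refine Finset.sum_congr rfl fun i hi ↦ ?_
    rw [hr i hi, AlgHom.commutes, Algebra.smul_def]
  intro i hi
  rw [hr i hi, linearIndependent_iff'.1 hv s r hrelation i hi, map_zero]

-- Normalize one coefficient to `1` by simplicity of `A`; commutators then shorten the relation,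
-- so by induction all its coefficients are central, contradicting independence over `F`.
theorem eq_zero_of_sum_mul_eq_zero [IsSimpleRing A] [Algebra.IsCentral F A] (g : A →ₐ[F] R)
    {v : ι → R} (hv : LinearIndependent F v) (hcomm : ∀ i a, Commute (g a) (v i))
    {s : Finset ι} {a : ι → A} (ha : ∑ i ∈ s, g (a i) * v i = 0) :
    ∀ i ∈ s, a i = 0 := by
  classical
  induction s using Finset.induction_on generalizing a with
  | empty => simp
  | insert j s hj ih =>
    have haj : a j = 0 := by
      by_contra hne
      obtain ⟨c, hc, hcj⟩ := mem_relationCoeffIdeal.1 <| IsSimpleRing.one_mem_of_ne_zero_mem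
        (relationCoeffIdeal (g : A →+* R) v hcomm (insert j s) j) hne
        (mem_relationCoeffIdeal.2 ⟨a, ha, rfl⟩)
      have hcentral : ∀ i ∈ insert j s, ∀ x, Commute x (c i) := by
        intro i hi x
        have hcommutator := sum_commutator_mul_eq_zero hcomm hc x
        rw [Finset.sum_insert hj, hcj, mul_one, one_mul, sub_self, map_zero, zero_mul,
          zero_add] at hcommutator
        obtain rfl | hi := Finset.mem_insert.1 hi
        · rw [hcj]
          exact Commute.one_right x
        · exact sub_eq_zero.1 (ih hcommutator i hi)
      have hcj_zero := eq_zero_of_sum_mul_eq_zero_of_forall_commute g hv hc hcentral j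
        (Finset.mem_insert_self j s)
      exact one_ne_zero (hcj.symm.trans hcj_zero)
    rw [Finset.sum_insert hj, haj, map_zero, zero_mul, zero_add] at ha
    exact Finset.forall_mem_insert .. |>.2 ⟨haj, ih ha⟩

theorem tensorProduct_lift_injective [IsSimpleRing A] [Algebra.IsCentral F A]
    {S K : Type*} [CommSemiring S] [Ring K] [Algebra F S] [Algebra F K] [Algebra S K]
    [Algebra S R] [IsScalarTower F S K] [IsScalarTower F S R]
    (f : K →ₐ[S] R) (g : A →ₐ[F] R) (hcomm : ∀ k a, Commute (f k) (g a))
    (hf : Function.Injective f) :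
    Function.Injective (Algebra.TensorProduct.lift f g hcomm) := by
  rw [injective_iff_map_eq_zero]
  intro t ht
  let b := Module.Basis.ofVectorSpace F K
  have hfb : LinearIndependent F (f ∘ b) :=
    b.linearIndependent.map_injOn (f.restrictScalars F).toLinearMap hf.injOn
  obtain ⟨c, rfl⟩ := TensorProduct.eq_repr_basis_left b t
  have hsum : ∑ i ∈ c.support, g (c i) * f (b i) = 0 := by
    simpa only [Finsupp.sum, map_sum, Algebra.TensorProduct.lift_tmul, (hcomm _ _).eq] using ht
  have hc := eq_zero_of_sum_mul_eq_zero g hfb (fun i a ↦ (hcomm (b i) a).symm) hsum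
  have hc_zero : c = 0 := Finsupp.ext fun i ↦ by
    by_contra hi
    exact hi (hc i (Finsupp.mem_support_iff.2 hi))
  rw [hc_zero, Finsupp.sum_zero_index]

end CentralSimple

section Bimodule

theorem nonempty_algHom_of_linearEquiv_self {R B S V : Type*} [CommSemiring R] [Semiring B]
    [Algebra R B] [CommSemiring S] [Algebra R S] [AddCommMonoid V] [Module R V] [Module B V]
    [IsScalarTower R B V] [Module S V] [IsScalarTower R S V] [SMulCommClass S B V]
    (e : V ≃ₗ[B] B) : Nonempty (S →ₐ[R] B) := by
  let toEnd : S →ₐ[R] Module.End B V := Algebra.lsmul R B V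
  let endEquiv : Module.End B V ≃ₐ[R] Bᵐᵒᵖ :=
    (e.conjAlgEquiv R).trans (AlgEquiv.moduleEndSelf R).symm
  exact ⟨(AlgHom.opComm (endEquiv.toAlgHom.comp toEnd)).comp (AlgEquiv.toOpposite R S).toAlgHom⟩

variable {F A : Type*} [Field F] [Ring A] [Algebra F A]

theorem isIsotypicOfType_of_isSimpleModule_ideal [IsSimpleRing A] [IsArtinianRing A]
    (I : Ideal A) [IsSimpleModule A I] (M : Type*) [AddCommGroup M] [Module A M] :
    IsIsotypicOfType A M I := by
  intro N _
  obtain ⟨J, ⟨e⟩⟩ := IsSemisimpleRing.exists_linearEquiv_ideal_of_isSimpleModule A N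
  have := IsSimpleModule.congr e.symm
  obtain ⟨e'⟩ := IsSimpleRing.isIsotypic A A I J
  exact ⟨e.trans e'⟩

theorem nonempty_linearEquiv_of_finrank_eq [IsSimpleRing A] [FiniteDimensional F A]
    {V W : Type*} [AddCommGroup V] [Module F V] [Module A V] [IsScalarTower F A V]
    [AddCommGroup W] [Module F W] [Module A W] [IsScalarTower F A W]
    [FiniteDimensional F V] [FiniteDimensional F W]
    (h : Module.finrank F V = Module.finrank F W) : Nonempty (V ≃ₗ[A] W) := by
  have := IsArtinianRing.of_finite F A
  have := Module.Finite.of_restrictScalars_finite F A V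
  have := Module.Finite.of_restrictScalars_finite F A W
  obtain ⟨I, hI⟩ := IsAtomic.exists_atom (Ideal A)
  rw [← isSimpleModule_iff_isAtom] at hI
  obtain ⟨p, ⟨eV⟩⟩ := (isIsotypicOfType_of_isSimpleModule_ideal I V).linearEquiv_fun
  obtain ⟨q, ⟨eW⟩⟩ := (isIsotypicOfType_of_isSimpleModule_ideal I W).linearEquiv_fun
  have hpq : p * Module.finrank F I = q * Module.finrank F I := by
    simpa [(eV.restrictScalars F).finrank_eq, (eW.restrictScalars F).finrank_eq,
      Module.finrank_pi_fintype] using h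
  have := IsSimpleModule.nontrivial A I
  have : FiniteDimensional F I := inferInstanceAs (FiniteDimensional F (I.restrictScalars F))
  obtain rfl := Nat.eq_of_mul_eq_mul_right Module.finrank_pos hpq
  exact ⟨eV.trans eW.symm⟩

theorem nonempty_algHom_of_algHom_end [IsSimpleRing A] [FiniteDimensional F A]
    {S V : Type*} [CommRing S] [Algebra F S] [AddCommGroup V] [Module F V] [Module S V]
    [IsScalarTower F S V] (h : Module.finrank F V = Module.finrank F A)
    (ρ : A →ₐ[F] Module.End S V) : Nonempty (S →ₐ[F] A) := by
  have : FiniteDimensional F V := Module.finite_of_finrank_pos (h ▸ Module.finrank_pos)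
  let _ : Module A V := Module.compHom V (ρ : A →+* Module.End S V)
  have smul_def (a : A) (v : V) : a • v = ρ a v := rfl
  have : IsScalarTower F A V := ⟨fun c a v ↦ by simp [smul_def]⟩
  have : SMulCommClass S A V := ⟨fun s a v ↦ by simp [smul_def]⟩
  obtain ⟨e⟩ := nonempty_linearEquiv_of_finrank_eq (A := A) h
  exact nonempty_algHom_of_linearEquiv_self e

variable {L : Type*} [Field L] [Algebra F L] {n : ℕ}

theorem nonempty_algHom_matrix_of_algHom [FiniteDimensional F A] [FiniteDimensional F L]
    (h : Module.finrank F A = Module.finrank F L * n) (f : L →ₐ[F] A) :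
    Nonempty (A →ₐ[F] Matrix (Fin n) (Fin n) L) := by
  let fop : L →ₐ[F] Aᵐᵒᵖ := f.toOpposite fun x y ↦ (Commute.all x y).map f
  let _ : Module L A := Module.compHom A (fop : L →+* Aᵐᵒᵖ)
  have smul_def (l : L) (a : A) : l • a = a * f l := rfl
  have : IsScalarTower F L A := ⟨fun c l a ↦ by simp [smul_def]⟩
  have : SMulCommClass A L A := ⟨fun a l x ↦ by simp [smul_def, mul_assoc]⟩
  have : FiniteDimensional L A := FiniteDimensional.right F L A
  have hfinrank : Module.finrank L A = n :=
    Nat.eq_of_mul_eq_mul_left Module.finrank_pos ((Module.finrank_mul_finrank F L A).trans h)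
  let matrixEquiv := algEquivMatrix (Module.finBasisOfFinrankEq L A hfinrank)
  exact ⟨(matrixEquiv.toAlgHom.restrictScalars F).comp (Algebra.lsmul F L A)⟩

end Bimodule

section Splitting

variable {F A L : Type*} [Field F] [Ring A] [Algebra F A] [Field L] [Algebra F L] {n : ℕ}

theorem nonempty_algEquiv_matrix_iff_nonempty_algHom [IsSimpleRing A] [Algebra.IsCentral F A]
    [NeZero n] (hA : Module.finrank F A = n ^ 2) :
    Nonempty ((L ⊗[F] A) ≃ₐ[L] Matrix (Fin n) (Fin n) L) ↔
      Nonempty (A →ₐ[F] Matrix (Fin n) (Fin n) L) := by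
  constructor
  · rintro ⟨e⟩
    exact ⟨(e.toAlgHom.restrictScalars F).comp Algebra.TensorProduct.includeRight⟩
  · rintro ⟨g⟩
    have : FiniteDimensional F A :=
      Module.finite_of_finrank_pos (hA ▸ pow_pos (NeZero.pos n) 2)
    let Φ := Algebra.TensorProduct.lift (Algebra.ofId L (Matrix (Fin n) (Fin n) L)) g
      fun l a ↦ Algebra.commutes l (g a)
    have hinj : Function.Injective Φ :=
      tensorProduct_lift_injective _ g _ (algebraMap L _).injective
    have hfinrank : Module.finrank L (L ⊗[F] A) =
        Module.finrank L (Matrix (Fin n) (Fin n) L) := by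
      rw [Module.finrank_baseChange, hA, Module.finrank_matrix]
      simp [sq]
    exact ⟨AlgEquiv.ofBijective Φ ⟨hinj,
      (LinearMap.injective_iff_surjective_of_finrank_eq_finrank (f := Φ.toLinearMap)
        hfinrank).1 hinj⟩⟩

theorem nonempty_algHom_matrix_iff_nonempty_algHom [IsSimpleRing A] [NeZero n]
    (hA : Module.finrank F A = n ^ 2) (hL : Module.finrank F L = n) :
    Nonempty (A →ₐ[F] Matrix (Fin n) (Fin n) L) ↔ Nonempty (L →ₐ[F] A) := by
  have : FiniteDimensional F A := Module.finite_of_finrank_pos (hA ▸ pow_pos (NeZero.pos n) 2)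
  have : FiniteDimensional F L := Module.finite_of_finrank_pos (hL ▸ NeZero.pos n)
  constructor
  · rintro ⟨g⟩
    have hfinrank : Module.finrank F (Fin n → L) = Module.finrank F A := by
      simp [Module.finrank_pi_fintype, hA, hL, sq]
    exact nonempty_algHom_of_algHom_end hfinrank
      ((Matrix.toLinAlgEquiv'.toAlgHom.restrictScalars F).comp g)
  · rintro ⟨f⟩
    exact nonempty_algHom_matrix_of_algHom (by rw [hA, hL, sq]) f

theorem quaternion_splits_iff_embeds_general [IsSimpleRing A] [Algebra.IsCentral F A]
    [NeZero n] (hA : Module.finrank F A = n ^ 2) (hL : Module.finrank F L = n) :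
    Nonempty ((L ⊗[F] A) ≃ₐ[L] Matrix (Fin n) (Fin n) L) ↔
      ∃ f : L →ₐ[F] A, Function.Injective f := by
  rw [nonempty_algEquiv_matrix_iff_nonempty_algHom hA,
    nonempty_algHom_matrix_iff_nonempty_algHom hA hL]
  exact ⟨fun ⟨f⟩ ↦ ⟨f, (f : L →+* A).injective⟩, fun ⟨f, _⟩ ↦ ⟨f⟩⟩

end Splitting

/-- Let `F` be a field and `D` a quaternion division algebra over `F`
(a division ring that is a central `F`-algebra of dimension 4).  Let `L/F` be a field
extension with `[L : F] = 2`.  Then `L` splits `D`, i.e. `L ⊗[F] D ≃ₐ[L] M₂(L)`,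
if and only if there is an injective `F`-algebra homomorphism `L → D`. -/
theorem quaternion_splits_iff_embeds
    (F : Type*) [Field F]
    (D : Type*) [DivisionRing D] [Algebra F D]
    (hcentral : Subalgebra.center F D = ⊥)
    (hdim : Module.finrank F D = 4)
    (L : Type*) [Field L] [Algebra F L]
    (hL : Module.finrank F L = 2) :
    Nonempty ((L ⊗[F] D) ≃ₐ[L] Matrix (Fin 2) (Fin 2) L) ↔
      ∃ f : L →ₐ[F] D, Function.Injective f := by
  have : Algebra.IsCentral F D := ⟨hcentral.le⟩
  exact quaternion_splits_iff_embeds_general hdim hL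
end

section
/- Let q be a prime power, F = 𝔽_q(T) the field of rational functions in one variable over the finite field 𝔽_q, and D a division ring that is a central F-algebra of dimension 4 over F. Then every finite subgroup G of the multiplicative group D^× is cyclic and its order divides q² − 1. -/
/-!
A finite group `G` of units of an algebra without zero divisors over a finite field `k` spans a
finite `k`-subalgebra, which is a field by Wedderburn's little theorem; hence `G` is cyclic and
its order is its exponent. If `k` is algebraically closed in the field `K`, then `x ∈ G` has the
same minimal polynomial over `k` and over `K`. When `D` is noncommutative of dimension `p ^ 2` over
`K`, the field `K[x]` is a proper subalgebra of `D`, so its dimension divides `p` and so does the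
degree of this polynomial. Being irreducible over `k`, it divides `X ^ (|k| ^ p) - X`.
-/

open Module Polynomial

theorem finite_adjoin_of_finite_submonoid (R : Type*) {A : Type*} [CommSemiring R] [Finite R]
    [Semiring A] [Algebra R A] (M : Submonoid A) [Finite M] :
    Finite (Algebra.adjoin R (M : Set A)) := by
  have hspan : Subalgebra.toSubmodule (Algebra.adjoin R (M : Set A)) =
      Submodule.span R (M : Set A) := by
    rw [Algebra.adjoin_eq_span, Submonoid.closure_eq]
  have : Module.Finite R (Submodule.span R (M : Set A)) :=
    .span_of_finite R (Set.toFinite (M : Set A))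
  have : Finite (Subalgebra.toSubmodule (Algebra.adjoin R (M : Set A))) :=
    hspan ▸ Module.finite_of_finite R
  exact this

theorem isCyclic_of_injective_monoidHom_of_finite (R : Type*) {A G : Type*} [CommRing R] [Finite R]
    [Ring A] [IsDomain A] [Algebra R A] [Group G] [Finite G] (f : G →* A)
    (hf : Function.Injective f) : IsCyclic G := by
  let S := Algebra.adjoin R (MonoidHom.mrange f : Set A)
  have : Finite (MonoidHom.mrange f) := Set.finite_range f
  have : Finite S := finite_adjoin_of_finite_submonoid R (MonoidHom.mrange f)
  let _ : CommRing S :=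
    { (inferInstance : Ring S) with mul_comm := (Finite.isDomain_to_isField S).mul_comm }
  have hmem (g : G) : f g ∈ S := Algebra.subset_adjoin ⟨g, rfl⟩
  exact isCyclic_of_injective_ringHom (f.codRestrict S hmem) fun _ _ h ↦
    hf (congrArg Subtype.val h)

instance isIntegrallyClosedIn_ratFunc (k : Type*) [Field k] :
    IsIntegrallyClosedIn k (RatFunc k) where
  algebraMap_injective := (algebraMap k (RatFunc k)).injective
  isIntegral_iff {f} := by
    refine ⟨fun hf ↦ ?_, ?_⟩
    · by_contra hconst
      refine f.transcendental_of_ne_C ?_ hf.isAlgebraic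
      rintro ⟨c, rfl⟩
      exact hconst ⟨c, rfl⟩
    · rintro ⟨c, rfl⟩
      exact isIntegral_algebraMap

section IsIntegrallyClosedIn

variable {R K : Type*} [CommRing R] [Field K] [Algebra R K] [IsIntegrallyClosedIn R K]

theorem mem_lifts_of_monic_of_dvd_map_of_isIntegrallyClosedIn {f : R[X]} (hf : f.Monic) {g : K[X]}
    (hg : g.Monic) (hdvd : g ∣ f.map (algebraMap R K)) : g ∈ lifts (algebraMap R K) := by
  refine (lifts_iff_coeff_lifts g).2 fun n ↦ IsIntegrallyClosedIn.isIntegral_iff.1 ?_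
  obtain ⟨c, hc⟩ := (lifts_iff_coeff_lifts g).1
    (integralClosure.mem_lifts_of_monic_of_dvd_map K hf hg hdvd) n
  exact hc ▸ c.2

variable (K) in
theorem minpoly_eq_map_of_isIntegrallyClosedIn {A : Type*} [Ring A] [Algebra R A] [Algebra K A]
    [IsScalarTower R K A] {x : A} (hx : IsIntegral R x) :
    minpoly K x = (minpoly R x).map (algebraMap R K) := by
  have hmonic := minpoly.monic (A := K) hx.tower_top
  have hdvd : minpoly K x ∣ (minpoly R x).map (algebraMap R K) :=
    minpoly.dvd_map_of_isScalarTower R K x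
  obtain ⟨Q, hQ, hdeg, hQmonic⟩ := lifts_and_natDegree_eq_and_monic
    (mem_lifts_of_monic_of_dvd_map_of_isIntegrallyClosedIn (minpoly.monic hx) hmonic hdvd) hmonic
  have hroot : aeval x Q = 0 := by
    rw [← aeval_map_algebraMap K, hQ, minpoly.aeval]
  refine (eq_of_monic_of_dvd_of_natDegree_le hmonic ((minpoly.monic hx).map _) hdvd ?_).symm
  rw [(minpoly.monic hx).natDegree_map, ← hdeg]
  exact natDegree_le_natDegree (minpoly.min R x hQmonic hroot)

end IsIntegrallyClosedIn

section Domain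

variable {K D : Type*} [Field K] [Ring D] [IsDomain D] [Algebra K D]

theorem finrank_subalgebra_dvd_finrank [FiniteDimensional K D] (S : Subalgebra K D) :
    finrank K S ∣ finrank K D := by
  let _ := divisionRingOfFiniteDimensional K S
  exact ⟨_, (finrank_mul_finrank K S D).symm⟩

theorem finrank_subalgebra_dvd_of_finrank_eq_prime_sq {p : ℕ} (hp : p.Prime)
    (hdim : finrank K D = p ^ 2) {S : Subalgebra K D} (hS : S ≠ ⊤) : finrank K S ∣ p := by
  have : FiniteDimensional K D := .of_finrank_pos (hdim ▸ pow_pos hp.pos 2)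
  have hne : finrank K S ≠ p ^ 2 := fun h ↦ hS <|
    Algebra.toSubmodule_eq_top.1 (Submodule.eq_top_of_finrank_eq (h.trans hdim.symm))
  obtain ⟨i, hi, hpow⟩ := (Nat.dvd_prime_pow hp).1 (hdim ▸ finrank_subalgebra_dvd_finrank S)
  have hi' : i ≤ 1 := Nat.le_of_lt_succ (hi.lt_of_ne fun h ↦ hne (h ▸ hpow))
  exact hpow ▸ (pow_dvd_pow p hi').trans (pow_one p).dvd

open scoped IsMulCommutative in
theorem natDegree_minpoly_dvd_finrank_of_mem {S : Subalgebra K D} [FiniteDimensional K S]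
    [IsMulCommutative S] {x : D} (hx : x ∈ S) : (minpoly K x).natDegree ∣ finrank K S := by
  let _ := fieldOfFiniteDimensional K S
  have h := minpoly.degree_dvd (Algebra.IsIntegral.isIntegral (R := K) (⟨x, hx⟩ : S))
  rwa [← minpoly.algHom_eq S.val Subtype.val_injective] at h

theorem natDegree_minpoly_dvd_of_finrank_eq_prime_sq {p : ℕ} (hp : p.Prime)
    (hcenter : Subalgebra.center K D ≠ ⊤) (hdim : finrank K D = p ^ 2) (x : D) :
    (minpoly K x).natDegree ∣ p := by
  have : FiniteDimensional K D := .of_finrank_pos (hdim ▸ pow_pos hp.pos 2)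
  have hproper : Algebra.adjoin K {x} ≠ ⊤ := fun htop ↦ hcenter <| by
    refine eq_top_iff.2 fun y _ ↦ Subalgebra.mem_center_iff.2 fun z ↦ ?_
    have hmem (w : D) : w ∈ Algebra.adjoin K {x} := htop ▸ Algebra.mem_top
    exact setLike_mul_comm (hmem z) (hmem y)
  exact (natDegree_minpoly_dvd_finrank_of_mem (Algebra.self_mem_adjoin_singleton K x)).trans
    (finrank_subalgebra_dvd_of_finrank_eq_prime_sq hp hdim hproper)

end Domain

theorem pow_natCard_pow_eq_self_of_natDegree_minpoly_dvd {k A : Type*} [Field k] [Finite k] [Ring A]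
    [IsDomain A] [Algebra k A] {x : A} (hx : IsIntegral k x) {n : ℕ}
    (hn : (minpoly k x).natDegree ∣ n) : x ^ Nat.card k ^ n = x := by
  have hdvd := (minpoly.irreducible hx).natDegree_dvd_iff_dvd_X_pow_card_pow_sub_X.1 hn
  simpa [sub_eq_zero] using aeval_eq_zero_of_dvd_aeval_eq_zero hdvd (minpoly.aeval k x)

theorem isIntegral_of_isOfFinOrder (R : Type*) {A : Type*} [CommRing R] [Ring A] [Algebra R A]
    {x : A} (hx : IsOfFinOrder x) : IsIntegral R x := by
  obtain ⟨n, hn, hpow⟩ := isOfFinOrder_iff_pow_eq_one.1 hx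
  exact .of_pow hn (hpow ▸ isIntegral_one)

theorem finite_subgroup_of_quaternion_units_cyclic_general (k : Type*) {K D : Type*} [Field k]
    [Finite k] [Field K] [Algebra k K] [IsIntegrallyClosedIn k K] [Ring D] [IsDomain D]
    [Algebra K D] {p : ℕ} (hp : p.Prime) (hcenter : Subalgebra.center K D ≠ ⊤)
    (hdim : finrank K D = p ^ 2) (G : Subgroup Dˣ) [Finite G] :
    IsCyclic G ∧ Nat.card G ∣ Nat.card k ^ p - 1 := by
  let _ : Algebra k D := Algebra.compHom D (algebraMap k K)
  have : IsScalarTower k K D := .of_algebraMap_eq fun _ ↦ rfl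
  let ι : G →* D := (Units.coeHom D).comp G.subtype
  have hι : Function.Injective ι := Units.val_injective.comp Subtype.val_injective
  have hcyclic : IsCyclic G := isCyclic_of_injective_monoidHom_of_finite k ι hι
  refine ⟨hcyclic, ?_⟩
  rw [← IsCyclic.exponent_eq_card]
  refine Monoid.exponent_dvd_of_forall_pow_eq_one fun g ↦ ?_
  have hint : IsIntegral k (ι g) :=
    isIntegral_of_isOfFinOrder k (ι.isOfFinOrder (isOfFinOrder_of_finite g))
  have hdeg : (minpoly k (ι g)).natDegree ∣ p := by
    rw [← (minpoly.monic hint).natDegree_map (algebraMap k K),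
      ← minpoly_eq_map_of_isIntegrallyClosedIn K hint]
    exact natDegree_minpoly_dvd_of_finrank_eq_prime_sq hp hcenter hdim (ι g)
  have hfix : g ^ Nat.card k ^ p = g := hι <| by
    rw [map_pow, pow_natCard_pow_eq_self_of_natDegree_minpoly_dvd hint hdeg]
  rwa [← pow_sub_one_mul (pow_ne_zero p Nat.card_pos.ne'), mul_eq_right] at hfix

/-- Let `q` be a prime power, `F = 𝔽_q(T)`, and `D` a division ring that is
a central `F`-algebra of dimension 4.  Then every finite subgroup `G` of `Dˣ` is cyclic and
its order divides `q² - 1`. -/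
theorem finite_subgroup_of_quaternion_units_cyclic
    (Fq : Type*) [Field Fq] [Fintype Fq]
    (D : Type*) [DivisionRing D] [Algebra (RatFunc Fq) D]
    (hcentral : Subalgebra.center (RatFunc Fq) D = ⊥)
    (hdim : Module.finrank (RatFunc Fq) D = 4)
    (G : Subgroup Dˣ) [Finite G] :
    IsCyclic G ∧ Nat.card G ∣ (Fintype.card Fq) ^ 2 - 1 := by
  have hcenter : Subalgebra.center (RatFunc Fq) D ≠ ⊤ := by
    simp [hcentral, Subalgebra.bot_eq_top_iff_finrank_eq_one, hdim]
  simpa only [Nat.card_eq_fintype_card (α := Fq)] using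
    finite_subgroup_of_quaternion_units_cyclic_general Fq Nat.prime_two hcenter hdim G
end

section
/- Let q be a prime power and S a nonempty finite set of monic irreducible polynomials in 𝔽_q[T]; set s := ∑_{f ∈ S} deg f. Then there exists a monic irreducible polynomial o ∈ 𝔽_q[T] with o ∉ S and q^{deg o} ≤ q·s (equivalently, deg o ≤ log_q(s) + 1). -/
/-!
The minimal polynomial of an element of a finite extension of `𝔽_q` divides a nonzero `P` only if
that element is a root of `P`, so a degree `n` extension `K` with `deg P < q ^ n = #K` contains an
element whose minimal polynomial does not divide `P`. That polynomial has degree at most `n`.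
Taking for `P` the product of the nonzero members of `S` and for `n` the least exponent with
`s < q ^ n` gives `q ^ n ≤ q * s`.
-/

open Polynomial

lemma exists_not_minpoly_dvd_of_natDegree_lt_card {F K : Type*} [Field F] [CommRing K] [IsDomain K]
    [Algebra F K] {P : F[X]} (hP : P ≠ 0) (hdeg : P.natDegree < Cardinal.mk K) :
    ∃ a : K, ¬ minpoly F a ∣ P := by
  obtain ⟨a, ha⟩ := (P.map (algebraMap F K)).exists_eval_ne_zero_of_natDegree_lt_card
    (Polynomial.map_ne_zero hP) (by rwa [natDegree_map])
  exact ⟨a, by rwa [minpoly.dvd_iff, ← eval_map_algebraMap]⟩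

section

variable {F : Type*} [Field F] [Finite F]

lemma exists_monic_irreducible_not_dvd_natDegree_dvd {P : F[X]} (hP : P ≠ 0) {n : ℕ} (hn : n ≠ 0)
    (hdeg : P.natDegree < Nat.card F ^ n) :
    ∃ o : F[X], o.Monic ∧ Irreducible o ∧ ¬ o ∣ P ∧ o.natDegree ∣ n := by
  obtain ⟨p, _⟩ := CharP.exists F
  have : Fact p.Prime := ⟨CharP.char_is_prime F p⟩
  have : NeZero n := ⟨hn⟩
  let K := FiniteField.Extension F p n
  have hcard : P.natDegree < Cardinal.mk K := by
    rw [← Nat.cast_card, FiniteField.natCard_extension]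
    exact_mod_cast hdeg
  obtain ⟨a, ha⟩ := exists_not_minpoly_dvd_of_natDegree_lt_card hP hcard
  have hint : IsIntegral F a := .of_finite F a
  refine ⟨minpoly F a, minpoly.monic hint, minpoly.irreducible hint, ha, ?_⟩
  simpa only [K, FiniteField.finrank_extension] using minpoly.degree_dvd hint

lemma exists_monic_irreducible_small_degree_not_dvd {P : F[X]} (hP : P.natDegree ≠ 0) :
    ∃ o : F[X], o.Monic ∧ Irreducible o ∧ ¬ o ∣ P ∧
      Nat.card F ^ o.natDegree ≤ Nat.card F * P.natDegree := by
  have hq : 1 < Nat.card F := Finite.one_lt_card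
  let m := Nat.log (Nat.card F) P.natDegree
  obtain ⟨o, hmonic, hirr, hdvd, hdeg⟩ := exists_monic_irreducible_not_dvd_natDegree_dvd
    (ne_zero_of_natDegree_gt hP.pos) m.succ_ne_zero (Nat.lt_pow_succ_log_self hq _)
  refine ⟨o, hmonic, hirr, hdvd, ?_⟩
  calc Nat.card F ^ o.natDegree
    _ ≤ Nat.card F ^ (m + 1) := Nat.pow_le_pow_right hq.le (Nat.le_of_dvd m.succ_pos hdeg)
    _ = Nat.card F * Nat.card F ^ m := pow_succ' _ _
    _ ≤ Nat.card F * P.natDegree := Nat.mul_le_mul_left _ (Nat.pow_log_le_self _ hP)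

end

theorem exists_monic_irreducible_small_degree_not_mem_general
    (Fq : Type*) [Field Fq] [Fintype Fq]
    (S : Finset (Polynomial Fq)) (hS : ∑ f ∈ S, f.natDegree ≠ 0) :
    ∃ o : Polynomial Fq, o.Monic ∧ Irreducible o ∧ o ∉ S ∧
      Fintype.card Fq ^ o.natDegree ≤ Fintype.card Fq * ∑ f ∈ S, f.natDegree := by
  classical
  have hprod : (∏ f ∈ S.erase 0, f).natDegree = ∑ f ∈ S, f.natDegree := by
    rw [natDegree_prod _ _ fun f hf ↦ Finset.ne_of_mem_erase hf, Finset.sum_erase S natDegree_zero]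
  obtain ⟨o, hmonic, hirr, hdvd, hdeg⟩ :=
    exists_monic_irreducible_small_degree_not_dvd (hprod.trans_ne hS)
  refine ⟨o, hmonic, hirr, fun ho ↦ hdvd ?_, ?_⟩
  · exact Finset.dvd_prod_of_mem _ (Finset.mem_erase.mpr ⟨hirr.ne_zero, ho⟩)
  · rwa [hprod, Nat.card_eq_fintype_card] at hdeg

/-- Let `q` be a prime power and `S` a nonempty finite set of monic
irreducible polynomials in `𝔽_q[T]`; set `s := ∑_{f ∈ S} deg f`.  Then there is a monic
irreducible polynomial `o ∉ S` with `q ^ deg o ≤ q * s`. -/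
theorem exists_monic_irreducible_small_degree_not_mem
    (Fq : Type*) [Field Fq] [Fintype Fq]
    (S : Finset (Polynomial Fq)) (hS : S.Nonempty)
    (hSmi : ∀ f ∈ S, f.Monic ∧ Irreducible f) :
    ∃ o : Polynomial Fq, o.Monic ∧ Irreducible o ∧ o ∉ S ∧
      Fintype.card Fq ^ o.natDegree ≤ Fintype.card Fq * ∑ f ∈ S, f.natDegree := by
  exact exists_monic_irreducible_small_degree_not_mem_general Fq S
    (Finset.sum_pos (fun f hf ↦ (hSmi f hf).2.natDegree_pos) hS).ne'
end

section
/- Let q be an odd prime power, F = 𝔽_q(T), ξ ∈ 𝔽_q^×, and let α₁ ≠ α₂ ∈ 𝔽_q with 𝔯 = (T − α₁)(T − α₂) ∈ 𝔽_q[T]. Set b₀ = (2T − (α₁ + α₂))/(α₁ − α₂) and d₀ = −2/(α₁ − α₂). Then b₀, d₀ ∈ 𝔽_q[T], so the element θ₂ := b₀·i + d₀·k lies in the 𝔽_q[T]-subalgebra Λ of H(ξ,𝔯) spanned by 1, i, j, k, and θ₂ satisfies θ₂² = ξ·1. -/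
open Quaternion Polynomial

/-!
In `H(ξ, 𝔯)` one has `(y i + z k)² = ξ (y² - 𝔯 z²)`, so `(y i + z k)² = ξ` as soon as `(y, z)`
solves the Pell equation `y² - 𝔯 z² = 1`. For `𝔯 = (T - α₁)(T - α₂)` a solution is obtained by
dividing the discriminant identity `(2T - (α₁ + α₂))² - 4𝔯 = (α₁ - α₂)²` by `(α₁ - α₂)²`.
-/

theorem quaternionAlgebra_imI_add_imK_sq {A : Type*} [CommRing A] (a b y z : A) :
    (⟨0, y, 0, z⟩ : ℍ[A, a, b]) ^ 2 = ((a * (y ^ 2 - b * z ^ 2) : A) : ℍ[A, a, b]) := by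
  rw [sq, QuaternionAlgebra.mk_mul_mk]
  ext <;> simp only [QuaternionAlgebra.re_coe, QuaternionAlgebra.imI_coe,
    QuaternionAlgebra.imJ_coe, QuaternionAlgebra.imK_coe] <;> ring

theorem sq_two_mul_sub_add_sub_four_mul {A : Type*} [CommRing A] (x a b : A) :
    (2 * x - (a + b)) ^ 2 - 4 * ((x - a) * (x - b)) = (a - b) ^ 2 := by
  ring

theorem pell_X_sub_C_mul_X_sub_C_eq_one {R : Type*} [CommRing R] {α₁ α₂ u : R}
    (hu : u * (α₁ - α₂) = 1) :
    (C u * (2 * X - C (α₁ + α₂))) ^ 2 - (X - C α₁) * (X - C α₂) * C (-2 * u) ^ 2 = 1 := by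
  have hd : C (-2 * u) = -2 * C u := by simp only [C_mul, C_neg, C_ofNat]
  calc (C u * (2 * X - C (α₁ + α₂))) ^ 2 - (X - C α₁) * (X - C α₂) * C (-2 * u) ^ 2
      = C u ^ 2 * ((2 * X - (C α₁ + C α₂)) ^ 2 - 4 * ((X - C α₁) * (X - C α₂))) := by
        rw [hd, C_add]; ring
    _ = C u ^ 2 * (C α₁ - C α₂) ^ 2 := by rw [sq_two_mul_sub_add_sub_four_mul]
    _ = C (u * (α₁ - α₂)) ^ 2 := by rw [C_mul, C_sub, mul_pow]
    _ = 1 := by rw [hu, C_1, one_pow]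

theorem theta_two_sq_eq_xi_general {R A : Type*} [CommRing R] [CommRing A] [Algebra R[X] A]
    (ξ : A) {α₁ α₂ u : R} (hu : u * (α₁ - α₂) = 1) :
    (⟨0, algebraMap R[X] A (C u * (2 * X - C (α₁ + α₂))), 0, algebraMap R[X] A (C (-2 * u))⟩ :
        ℍ[A, ξ, algebraMap R[X] A ((X - C α₁) * (X - C α₂))]) ^ 2 = (ξ : ℍ[A, ξ, _]) := by
  rw [quaternionAlgebra_imI_add_imK_sq, ← map_pow, ← map_pow, ← map_mul, ← map_sub,
    pell_X_sub_C_mul_X_sub_C_eq_one hu, map_one, mul_one]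

/-- Let `q` be an odd prime power, `ξ ∈ 𝔽_q^×`, `α₁ ≠ α₂ ∈ 𝔽_q`,
`𝔯 = (T − α₁)(T − α₂)`.  With `b₀ = (2T − (α₁+α₂))/(α₁−α₂)` and `d₀ = −2/(α₁−α₂)`
(which are polynomials), the element `θ₂ = b₀·i + d₀·k` of the `𝔽_q[T]`-subalgebra `Λ`
of `H(ξ,𝔯)` satisfies `θ₂² = ξ·1`. -/
theorem theta_two_sq_eq_xi
    (Fq : Type*) [Field Fq] [Fintype Fq] (hodd : Odd (Fintype.card Fq))
    (ξ : Fq) (hξ : ξ ≠ 0) (α₁ α₂ : Fq) (hα : α₁ ≠ α₂) :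
    let r : Polynomial Fq := (X - C α₁) * (X - C α₂)
    let b₀ : Polynomial Fq := C (α₁ - α₂)⁻¹ * (2 * X - C (α₁ + α₂))
    let d₀ : Polynomial Fq := C (-(2) * (α₁ - α₂)⁻¹)
    let θ₂ : ℍ[RatFunc Fq, RatFunc.C ξ, algebraMap (Polynomial Fq) (RatFunc Fq) r] :=
      ⟨0, algebraMap (Polynomial Fq) (RatFunc Fq) b₀, 0,
        algebraMap (Polynomial Fq) (RatFunc Fq) d₀⟩
    θ₂ ^ 2 = ((RatFunc.C ξ : RatFunc Fq) :
        ℍ[RatFunc Fq, RatFunc.C ξ, algebraMap (Polynomial Fq) (RatFunc Fq) r]) :=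
  theta_two_sq_eq_xi_general (RatFunc.C ξ) (inv_mul_cancel₀ (sub_ne_zero.mpr hα))
end

section
/- Let q be an odd prime power, F = 𝔽_q(T), ξ ∈ 𝔽_q^× a non-square in 𝔽_q, and let 𝔯 ∈ 𝔽_q[T] be a product of at least one and finitely many pairwise distinct monic irreducible polynomials, each of odd degree. Then the quaternion algebra H(ξ,𝔯) over F is a division ring. -/
open Quaternion Polynomial

/-!
A quaternion `x` is a unit as soon as its reduced norm
`x * star x = (a² - ξ b²) - 𝔯 (c² - ξ d²)` is. Let `p` be a prime of odd degree dividing `𝔯` to an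
odd power. The residue field at `p` has odd degree over the constants, so `ξ` remains a non-square
there, and hence `a² - ξ b²` is divisible by `p` only if `a` and `b` are. The `p`-adic valuation of
a nonzero `a² - ξ b²` is therefore even and that of a nonzero `𝔯 (c² - ξ d²)` is odd, so the two
agree only when `a = b = c = d = 0`.
-/

section ReducedNorm

variable {R : Type*} [CommRing R]

theorem quaternionAlgebra_re_mul_star {u v : R} (x : ℍ[R,u,v]) :
    (x * star x).re = x.re ^ 2 - u * x.imI ^ 2 - v * (x.imJ ^ 2 - u * x.imK ^ 2) := by
  simp only [QuaternionAlgebra.re_mul, QuaternionAlgebra.re_star, QuaternionAlgebra.imI_star,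
    QuaternionAlgebra.imJ_star, QuaternionAlgebra.imK_star]
  ring

theorem isUnit_of_isUnit_re_mul_star {c₁ c₂ c₃ : R} {x : ℍ[R,c₁,c₂,c₃]}
    (hx : IsUnit (x * star x).re) : IsUnit x := by
  have hnorm : IsUnit (x * star x) := by
    rw [QuaternionAlgebra.mul_star_eq_coe]
    exact hx.map (algebraMap R ℍ[R,c₁,c₂,c₃])
  exact ((Commute.isUnit_mul_iff (star_comm_self' x).symm).mp hnorm).1

end ReducedNorm

theorem eq_top_of_two_mul_eq_odd_add_two_mul {e : ℕ} (he : Odd e) {m n : ℕ∞}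
    (h : 2 * m = e + 2 * n) : m = ⊤ ∧ n = ⊤ := by
  induction m using ENat.recTopCoe <;> induction n using ENat.recTopCoe
  · simp
  · norm_cast at h
  · norm_cast at h
  · norm_cast at h
    obtain ⟨l, rfl⟩ := he
    lia

section Anisotropic

variable {R : Type*} [CommRing R]

/-- The binary form `x² - u y²` has no nontrivial zero modulo `p`. When `R ⧸ (p)` is a field this
says that `u` is not a square in it; the divisibility form avoids mentioning the quotient. -/
def IsAnisotropicMod (u p : R) : Prop :=
  ∀ ⦃a b : R⦄, p ∣ a ^ 2 - u * b ^ 2 → p ∣ a ∧ p ∣ b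

namespace IsAnisotropicMod

theorem of_not_isSquare_map {k : Type*} [Field k] {u p : R} (φ : R →+* k)
    (hφ : ∀ a, φ a = 0 ↔ p ∣ a) (hu : ¬ IsSquare (φ u)) : IsAnisotropicMod u p := by
  intro a b h
  have hab : φ a ^ 2 = φ u * φ b ^ 2 := by
    rwa [← hφ, map_sub, map_mul, map_pow, map_pow, sub_eq_zero] at h
  have hb : φ b = 0 := by
    by_contra hb
    have hquot : φ u = (φ a / φ b) ^ 2 := by rw [div_pow, hab]; field_simp
    exact hu (hquot ▸ IsSquare.sq _)
  have ha : φ a = 0 := by simpa [hb] using hab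
  exact ⟨(hφ a).mp ha, (hφ b).mp hb⟩

variable [IsDomain R] {u p : R}

theorem pow_succ_dvd_of_dvd_sq_sub_mul_sq (hu : IsAnisotropicMod u p) (hp : p ≠ 0)
    (k : ℕ) {a b : R} (h : p ^ (2 * k + 1) ∣ a ^ 2 - u * b ^ 2) :
    p ^ (k + 1) ∣ a ∧ p ^ (k + 1) ∣ b := by
  induction k generalizing a b with
  | zero => simpa using hu (by simpa using h)
  | succ k ih =>
    obtain ⟨⟨a, rfl⟩, ⟨b, rfl⟩⟩ := hu ((dvd_pow_self p (by lia)).trans h)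
    have hquot : p ^ (2 * k + 1) ∣ a ^ 2 - u * b ^ 2 := by
      rw [← mul_dvd_mul_iff_left (pow_ne_zero 2 hp)]
      convert h using 1 <;> ring
    obtain ⟨ha, hb⟩ := ih hquot
    rw [pow_succ' p (k + 1)]
    exact ⟨mul_dvd_mul_left p ha, mul_dvd_mul_left p hb⟩

theorem pow_dvd_sq_sub_mul_sq_iff (hu : IsAnisotropicMod u p) (hp : p ≠ 0) (m : ℕ)
    {a b : R} :
    p ^ m ∣ a ^ 2 - u * b ^ 2 ↔ p ^ ((m + 1) / 2) ∣ a ∧ p ^ ((m + 1) / 2) ∣ b := by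
  constructor
  · intro h
    rcases m with _ | m
    · simp
    · have hk : (m + 1 + 1) / 2 = m / 2 + 1 := by lia
      rw [hk]
      exact hu.pow_succ_dvd_of_dvd_sq_sub_mul_sq hp _ ((pow_dvd_pow p (by lia)).trans h)
  · rintro ⟨ha, hb⟩
    have hsq {c : R} (hc : p ^ ((m + 1) / 2) ∣ c) : p ^ m ∣ c ^ 2 :=
      (pow_dvd_pow p (by lia)).trans (pow_mul p _ 2 ▸ pow_dvd_pow_of_dvd hc 2)
    exact dvd_sub (hsq ha) ((hsq hb).mul_left u)

theorem emultiplicity_sq_sub_mul_sq (hu : IsAnisotropicMod u p) (hp : p ≠ 0) (a b : R) :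
    emultiplicity p (a ^ 2 - u * b ^ 2) = 2 * min (emultiplicity p a) (emultiplicity p b) := by
  refine ENat.eq_of_forall_natCast_le_iff fun m ↦ ?_
  rw [← pow_dvd_iff_le_emultiplicity, hu.pow_dvd_sq_sub_mul_sq_iff hp,
    pow_dvd_iff_le_emultiplicity, pow_dvd_iff_le_emultiplicity, ← le_min_iff]
  induction min (emultiplicity p a) (emultiplicity p b) using ENat.recTopCoe with
  | top => simp
  | coe n =>
    norm_cast
    lia

variable [WfDvdMonoid R] {r : R} {e : ℕ}

theorem eq_zero_of_sq_sub_eq_mul (hu : IsAnisotropicMod u p) (hp : Prime p)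
    (he : Odd e) (hr : emultiplicity p r = e) {a b c d : R}
    (h : a ^ 2 - u * b ^ 2 = r * (c ^ 2 - u * d ^ 2)) : a = 0 ∧ b = 0 ∧ c = 0 ∧ d = 0 := by
  have hval := congrArg (emultiplicity p) h
  rw [emultiplicity_mul hp, hr, hu.emultiplicity_sq_sub_mul_sq hp.ne_zero,
    hu.emultiplicity_sq_sub_mul_sq hp.ne_zero] at hval
  have htop := eq_top_of_two_mul_eq_odd_add_two_mul he hval
  simp only [min_eq_top] at htop
  obtain ⟨⟨ha, hb⟩, hc, hd⟩ := htop
  have hzero {z : R} (hz : emultiplicity p z = ⊤) : z = 0 := by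
    by_contra hne
    exact emultiplicity_eq_top.mp hz (FiniteMultiplicity.of_prime_left hp hne)
  exact ⟨hzero ha, hzero hb, hzero hc, hzero hd⟩

variable {K : Type*} [Field K] [Algebra R K] [IsFractionRing R K]

theorem eq_zero_of_sq_sub_eq_mul_of_isFractionRing (hu : IsAnisotropicMod u p)
    (hp : Prime p) (he : Odd e) (hr : emultiplicity p r = e) {a b c d : K}
    (h : a ^ 2 - algebraMap R K u * b ^ 2 =
      algebraMap R K r * (c ^ 2 - algebraMap R K u * d ^ 2)) :
    a = 0 ∧ b = 0 ∧ c = 0 ∧ d = 0 := by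
  classical
  obtain ⟨m, hm⟩ := IsLocalization.exist_integer_multiples_of_finset
    (nonZeroDivisors R) ({a, b, c, d} : Finset K)
  have hm₀ : algebraMap R K m ≠ 0 := IsFractionRing.to_map_ne_zero_of_mem_nonZeroDivisors m.2
  simp only [Finset.mem_insert, Finset.mem_singleton, forall_eq_or_imp, forall_eq,
    Algebra.smul_def] at hm
  obtain ⟨⟨a', ha⟩, ⟨b', hb⟩, ⟨c', hc⟩, ⟨d', hd⟩⟩ := hm
  have hcleared : a' ^ 2 - u * b' ^ 2 = r * (c' ^ 2 - u * d' ^ 2) := by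
    apply IsFractionRing.injective R K
    simp only [map_sub, map_mul, map_pow, ha, hb, hc, hd]
    linear_combination (algebraMap R K m) ^ 2 * h
  obtain ⟨rfl, rfl, rfl, rfl⟩ := hu.eq_zero_of_sq_sub_eq_mul hp he hr hcleared
  simp only [map_zero, zero_eq_mul, hm₀, false_or] at ha hb hc hd
  exact ⟨ha, hb, hc, hd⟩

theorem isUnit_quaternion_of_ne_zero (hu : IsAnisotropicMod u p) (hp : Prime p)
    (he : Odd e) (hr : emultiplicity p r = e)
    {x : ℍ[K,algebraMap R K u,algebraMap R K r]} (hx : x ≠ 0) : IsUnit x := by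
  refine isUnit_of_isUnit_re_mul_star (isUnit_iff_ne_zero.mpr fun hnorm ↦ hx ?_)
  rw [quaternionAlgebra_re_mul_star, sub_eq_zero] at hnorm
  obtain ⟨h₁, h₂, h₃, h₄⟩ := hu.eq_zero_of_sq_sub_eq_mul_of_isFractionRing hp he hr hnorm
  ext <;> assumption

end IsAnisotropicMod

end Anisotropic

section OddDegree

variable {K : Type*} [Field K] {ξ : K}

theorem not_isSquare_algebraMap_of_odd_finrank {L : Type*} [Field L] [Algebra K L]
    (hL : Odd (Module.finrank K L)) (hξ : ¬ IsSquare ξ) : ¬ IsSquare (algebraMap K L ξ) := by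
  rw [isSquare_iff_exists_sq]
  rintro ⟨t, ht⟩
  have : Module.Finite K L := Module.finite_of_finrank_pos hL.pos
  have hirr : Irreducible (X ^ 2 - C ξ : K[X]) :=
    X_pow_sub_C_irreducible_of_prime Nat.prime_two fun s hs ↦
      hξ ((isSquare_iff_exists_sq ξ).mpr ⟨s, hs.symm⟩)
  have hmin : X ^ 2 - C ξ = minpoly K t :=
    minpoly.eq_of_irreducible_of_monic hirr (by simp [ht]) (monic_X_pow_sub_C ξ two_ne_zero)
  have htwo : 2 ∣ Module.finrank K L := by
    simpa [← hmin] using minpoly.degree_dvd (IsIntegral.of_finite K t)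
  exact hL.not_two_dvd_nat htwo

theorem isAnisotropicMod_C_of_odd_natDegree (hξ : ¬ IsSquare ξ) {p : K[X]} (hp : Irreducible p)
    (hdeg : Odd p.natDegree) : IsAnisotropicMod (C ξ) p := by
  have : Fact (Irreducible p) := ⟨hp⟩
  have hfinrank : Module.finrank K (AdjoinRoot p) = p.natDegree :=
    (AdjoinRoot.powerBasis hp.ne_zero).finrank
  have hroot : ¬ IsSquare (algebraMap K (AdjoinRoot p) ξ) :=
    not_isSquare_algebraMap_of_odd_finrank (hfinrank ▸ hdeg) hξ
  exact .of_not_isSquare_map (AdjoinRoot.mk p) (fun _ ↦ AdjoinRoot.mk_eq_zero) hroot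

end OddDegree

theorem emultiplicity_finset_prod_eq_one {M : Type*} [CommMonoidWithZero M] [IsCancelMulZero M]
    {S : Finset M} {p : M} (hp : Prime p) (hpS : p ∈ S) (hS : ∀ f ∈ S, p ∣ f → f = p) :
    emultiplicity p (∏ f ∈ S, f) = 1 := by
  rw [Finset.emultiplicity_prod hp, Finset.sum_eq_single_of_mem p hpS fun f hf hne ↦
    emultiplicity_eq_zero.mpr fun hdvd ↦ hne (hS f hf hdvd)]
  simpa using emultiplicity_pow_self_of_prime hp 1

theorem emultiplicity_finset_prod_eq_one_of_monic_irreducible {K : Type*} [Field K]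
    {S : Finset K[X]} (hS : ∀ f ∈ S, f.Monic ∧ Irreducible f) {p : K[X]} (hpS : p ∈ S) :
    emultiplicity p (∏ f ∈ S, f) = 1 := by
  obtain ⟨hpm, hp⟩ := hS p hpS
  refine emultiplicity_finset_prod_eq_one hp.prime hpS fun f hf hdvd ↦ ?_
  obtain ⟨hfm, hfi⟩ := hS f hf
  exact eq_of_monic_of_associated hfm hpm (hp.associated_of_dvd hfi hdvd).symm

theorem quaternion_algebra_isDivisionRing_general {K : Type*} [Field K] {ξ : K}
    (hξ : ¬ IsSquare ξ) {p r : K[X]} (hp : Irreducible p) (hdeg : Odd p.natDegree)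
    {e : ℕ} (he : Odd e) (hr : emultiplicity p r = e) :
    ∀ x : ℍ[RatFunc K, RatFunc.C ξ, algebraMap K[X] (RatFunc K) r], x ≠ 0 → IsUnit x := by
  have hu : IsAnisotropicMod (C ξ) p := isAnisotropicMod_C_of_odd_natDegree hξ hp hdeg
  rw [← RatFunc.algebraMap_C]
  exact fun _ ↦ hu.isUnit_quaternion_of_ne_zero hp.prime he hr

/-- Let `q` be an odd prime power, `ξ ∈ 𝔽_q^×` a non-square, and
`𝔯 ∈ 𝔽_q[T]` a product of at least one and finitely many pairwise distinct monic
irreducible polynomials, each of odd degree.  Then the quaternion algebra `H(ξ,𝔯)`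
over `F = 𝔽_q(T)` is a division ring: every nonzero element is a unit. -/
theorem quaternion_algebra_isDivisionRing
    (Fq : Type*) [Field Fq] [Fintype Fq] (hodd : Odd (Fintype.card Fq))
    (ξ : Fq) (hξ : ξ ≠ 0) (hns : ¬ ∃ u : Fq, u ^ 2 = ξ)
    (S : Finset (Polynomial Fq)) (hS : S.Nonempty)
    (hSmi : ∀ f ∈ S, f.Monic ∧ Irreducible f ∧ Odd f.natDegree)
    (r : Polynomial Fq) (hr : r = ∏ f ∈ S, f) :
    ∀ x : ℍ[RatFunc Fq, RatFunc.C ξ, algebraMap (Polynomial Fq) (RatFunc Fq) r],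
      x ≠ 0 → IsUnit x := by
  obtain ⟨p, hpS⟩ := hS
  have hξsq : ¬ IsSquare ξ := by simpa only [isSquare_iff_exists_sq, eq_comm] using hns
  exact quaternion_algebra_isDivisionRing_general hξsq (hSmi p hpS).2.1 (hSmi p hpS).2.2 odd_one
    (hr ▸ emultiplicity_finset_prod_eq_one_of_monic_irreducible
      (fun f hf ↦ ⟨(hSmi f hf).1, (hSmi f hf).2.1⟩) hpS)
end

section
/- Let q be an odd prime power, ξ ∈ 𝔽_q^× a non-square in 𝔽_q, and π ∈ 𝔽_q[T] a monic irreducible polynomial of odd degree. Then for any c, d ∈ 𝔽_q[T], not both zero, the element c² − ξd² is nonzero and the exponent of π in the factorization of c² − ξd² (i.e., the π-adic valuation of c² − ξd²) is even. -/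
open Polynomial

/-!
By taking norms, a non-square of `F` stays a non-square in an extension of odd degree, such as
`F[T]/(π)`. Hence `x² - ξy²` is anisotropic modulo `π`: it is divisible by `π` only if both `x` and
`y` are. Pulling out of `c` and `d` their largest common power `π ^ k` therefore leaves a norm form
prime to `π`, so the valuation of `c² - ξd²` is exactly `2k`.
-/

theorem isSquare_pow_iff_of_odd {G₀ : Type*} [CommGroupWithZero G₀] {a : G₀} {n : ℕ} (hn : Odd n) :
    IsSquare (a ^ n) ↔ IsSquare a := by
  refine ⟨fun h ↦ ?_, fun h ↦ h.pow n⟩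
  obtain rfl | ha := eq_or_ne a 0
  · exact IsSquare.zero
  obtain ⟨k, rfl⟩ := hn
  have a_eq : a = a ^ (2 * k + 1) / a ^ (2 * k) := by
    rw [pow_succ', mul_div_cancel_right₀ _ (pow_ne_zero _ ha)]
  rw [a_eq]
  exact h.div ((even_two_mul k).isSquare_pow a)

theorem isSquare_algebraMap_iff_of_odd_finrank {F A : Type*} [Field F] [Ring A] [Algebra F A]
    (hodd : Odd (Module.finrank F A)) {ξ : F} : IsSquare (algebraMap F A ξ) ↔ IsSquare ξ := by
  refine ⟨fun h ↦ ?_, fun h ↦ h.map (algebraMap F A)⟩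
  rw [← isSquare_pow_iff_of_odd hodd, ← Algebra.norm_algebraMap]
  exact h.map (Algebra.norm F)

theorem sq_sub_mul_sq_eq_zero_iff {K : Type*} [Field K] {e x y : K} (he : ¬IsSquare e) :
    x ^ 2 - e * y ^ 2 = 0 ↔ x = 0 ∧ y = 0 := by
  refine ⟨fun h ↦ ?_, fun ⟨hx, hy⟩ ↦ by simp [hx, hy]⟩
  have x_sq : x ^ 2 = e * y ^ 2 := sub_eq_zero.mp h
  obtain rfl | hy := eq_or_ne y 0
  · simpa using x_sq
  · have e_eq : e = (x / y) ^ 2 := by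
      rw [div_pow, x_sq, mul_div_cancel_right₀ _ (pow_ne_zero 2 hy)]
    exact absurd (e_eq ▸ IsSquare.sq (x / y)) he

theorem dvd_sq_sub_C_mul_sq_iff {F : Type*} [Field F] {ξ : F} (hξ : ¬IsSquare ξ) {π : F[X]}
    (hπ : Irreducible π) (hdeg : Odd π.natDegree) {c d : F[X]} :
    π ∣ c ^ 2 - C ξ * d ^ 2 ↔ π ∣ c ∧ π ∣ d := by
  have : Fact (Irreducible π) := ⟨hπ⟩
  have finrank_odd : Odd (Module.finrank F (AdjoinRoot π)) :=
    (finrank_quotient_span_eq_natDegree (f := π)).symm ▸ hdeg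
  have hξ' : ¬IsSquare (AdjoinRoot.of π ξ) :=
    (isSquare_algebraMap_iff_of_odd_finrank finrank_odd).not.mpr hξ
  simp only [← AdjoinRoot.mk_eq_zero, map_sub, map_mul, map_pow, AdjoinRoot.mk_C]
  exact sq_sub_mul_sq_eq_zero_iff hξ'

theorem exists_eq_pow_mul_and_eq_pow_mul_and_not_dvd {M : Type*} [CommMonoidWithZero M]
    [IsCancelMulZero M] [WfDvdMonoid M] {p a b : M} (hp : ¬IsUnit p) (hab : ¬(a = 0 ∧ b = 0)) :
    ∃ (k : ℕ) (a' b' : M), a = p ^ k * a' ∧ b = p ^ k * b' ∧ ¬(p ∣ a' ∧ p ∣ b') := by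
  wlog hle : emultiplicity p a ≤ emultiplicity p b generalizing a b
  · obtain ⟨k, b', a', hb, ha, hndvd⟩ := this (mt And.symm hab) (le_of_not_ge hle)
    exact ⟨k, a', b', ha, hb, mt And.symm hndvd⟩
  have ha : a ≠ 0 := by
    rintro rfl
    have hb : b ≠ 0 := fun hb ↦ hab ⟨rfl, hb⟩
    rw [emultiplicity_zero, top_le_iff, emultiplicity_eq_top] at hle
    exact hle (FiniteMultiplicity.of_not_isUnit hp hb)
  have hfin : FiniteMultiplicity p a := .of_not_isUnit hp ha
  obtain ⟨a', ha', hndvd⟩ := hfin.exists_eq_pow_mul_and_not_dvd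
  obtain ⟨b', hb'⟩ : p ^ multiplicity p a ∣ b :=
    pow_dvd_of_le_emultiplicity (hfin.emultiplicity_eq_multiplicity ▸ hle)
  exact ⟨multiplicity p a, a', b', ha', hb', fun h ↦ hndvd h.1⟩

theorem exists_even_pow_dvd_sq_sub_mul_sq {R : Type*} [CommRing R] [IsDomain R] [WfDvdMonoid R]
    {p e : R} (hp₀ : p ≠ 0) (hp : ¬IsUnit p)
    (haniso : ∀ x y : R, p ∣ x ^ 2 - e * y ^ 2 → p ∣ x ∧ p ∣ y)
    {c d : R} (hcd : ¬(c = 0 ∧ d = 0)) :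
    ∃ m : ℕ, Even m ∧ p ^ m ∣ c ^ 2 - e * d ^ 2 ∧ ¬p ^ (m + 1) ∣ c ^ 2 - e * d ^ 2 := by
  obtain ⟨k, c', d', rfl, rfl, hndvd⟩ := exists_eq_pow_mul_and_eq_pow_mul_and_not_dvd hp hcd
  have factor : (p ^ k * c') ^ 2 - e * (p ^ k * d') ^ 2 =
      p ^ (2 * k) * (c' ^ 2 - e * d' ^ 2) := by ring
  refine ⟨2 * k, even_two_mul k, ?_, ?_⟩ <;> rw [factor]
  · exact dvd_mul_right _ _
  · rw [pow_succ, mul_dvd_mul_iff_left (pow_ne_zero _ hp₀)]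
    exact mt (haniso c' d') hndvd

theorem valuation_of_norm_form_even_general {F : Type*} [Field F] {ξ : F} (hξ : ¬IsSquare ξ)
    {π : F[X]} (hπ : Irreducible π) (hdeg : Odd π.natDegree)
    {c d : F[X]} (hcd : ¬(c = 0 ∧ d = 0)) :
    c ^ 2 - C ξ * d ^ 2 ≠ 0 ∧
      ∃ m : ℕ, Even m ∧ π ^ m ∣ c ^ 2 - C ξ * d ^ 2 ∧
        ¬π ^ (m + 1) ∣ c ^ 2 - C ξ * d ^ 2 := by
  obtain ⟨m, hm, hdvd, hndvd⟩ := exists_even_pow_dvd_sq_sub_mul_sq hπ.ne_zero hπ.not_isUnit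
    (fun _ _ ↦ (dvd_sq_sub_C_mul_sq_iff hξ hπ hdeg).mp) hcd
  exact ⟨fun h ↦ hndvd (h ▸ dvd_zero _), m, hm, hdvd, hndvd⟩

/-- Let `q` be an odd prime power, `ξ ∈ 𝔽_q^×` a non-square, and
`π ∈ 𝔽_q[T]` monic irreducible of odd degree.  For any `c, d ∈ 𝔽_q[T]`, not both zero,
the element `c² − ξd²` is nonzero and its `π`-adic valuation is even. -/
theorem valuation_of_norm_form_even
    (Fq : Type*) [Field Fq] [Fintype Fq] (hodd : Odd (Fintype.card Fq))
    (ξ : Fq) (hξ : ξ ≠ 0) (hns : ¬ ∃ u : Fq, u ^ 2 = ξ)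
    (π : Polynomial Fq) (hπm : π.Monic) (hπirr : Irreducible π)
    (hπdeg : Odd π.natDegree)
    (c d : Polynomial Fq) (hcd : ¬ (c = 0 ∧ d = 0)) :
    c ^ 2 - C ξ * d ^ 2 ≠ 0 ∧
      ∃ m : ℕ, Even m ∧ π ^ m ∣ c ^ 2 - C ξ * d ^ 2 ∧
        ¬ π ^ (m + 1) ∣ c ^ 2 - C ξ * d ^ 2 := by
  have hξ' : ¬IsSquare ξ := fun ⟨u, hu⟩ ↦ hns ⟨u, by rw [hu, sq]⟩
  exact valuation_of_norm_form_even_general hξ' hπirr hπdeg hcd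
end

section
/- Let q be an odd prime power, F = 𝔽_q(T), ξ ∈ 𝔽_q^× a non-square in 𝔽_q, and let 𝔯 ∈ 𝔽_q[T] be a product of at least one and finitely many pairwise distinct monic irreducible polynomials, each of odd degree. Then there is no element γ ∈ H(ξ,𝔯) satisfying both γ·i = −(i·γ) and Nr(γ) ∈ 𝔽_q^×. In particular, i and −i are not conjugate by any unit γ of the 𝔽_q[T]-subalgebra Λ of H(ξ,𝔯) spanned by 1, i, j, k. -/
open Quaternion Polynomial

/-- Membership in the `𝔽_q[T]`-subalgebra `Λ` of `H(ξ,𝔯)` spanned by `1, i, j, k`: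
all four coordinates are polynomials. -/
def memLambda {Fq : Type*} [Field Fq] [Fintype Fq] {ξ r : RatFunc Fq}
    (x : ℍ[RatFunc Fq, ξ, r]) : Prop :=
  x.re ∈ (algebraMap (Polynomial Fq) (RatFunc Fq)).range ∧
  x.imI ∈ (algebraMap (Polynomial Fq) (RatFunc Fq)).range ∧
  x.imJ ∈ (algebraMap (Polynomial Fq) (RatFunc Fq)).range ∧
  x.imK ∈ (algebraMap (Polynomial Fq) (RatFunc Fq)).range

/-- The reduced norm `Nr(a + bi + cj + dk) = a² - ξb² - 𝔯c² + ξ𝔯d²` on `H(ξ,𝔯)`. -/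
noncomputable def quatNr {Fq : Type*} [Field Fq] [Fintype Fq] (ξ r : RatFunc Fq)
    (x : ℍ[RatFunc Fq, ξ, r]) : RatFunc Fq :=
  x.re ^ 2 - ξ * x.imI ^ 2 - r * x.imJ ^ 2 + ξ * r * x.imK ^ 2

/-! An element anticommuting with `i` lies in `Fj + Fk`, where the reduced norm is
`-𝔯(x² - ξy²)`. If `p` is a prime of odd degree, then `ξ` stays a non-square in the odd degree
extension `𝔽_q[T]/(p)` of `𝔽_q`, so a nonzero `x² - ξy²` has even `p`-adic valuation. When `p`
divides `𝔯` exactly once, the reduced norm therefore has odd `p`-adic valuation, which no nonzero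
constant does. The parity argument is run as a descent: an integral solution of
`𝔯(A² - ξB²) = kE²` with `p ∤ k` is divisible by `p`, and the quotient is again a solution. -/

section QuadraticForm

theorem isSquare_of_odd_finrank {K L : Type*} [Field K] [Ring L] [Algebra K L]
    (hodd : Odd (Module.finrank K L)) {a : K} (ha : IsSquare (algebraMap K L a)) : IsSquare a := by
  obtain ⟨m, hm⟩ := hodd
  have hpow : IsSquare (a ^ (2 * m + 1)) := by
    simpa only [Algebra.norm_algebraMap, hm] using ha.map (Algebra.norm K)
  rcases eq_or_ne a 0 with rfl | ha0
  · exact IsSquare.zero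
  · have hdiv : a ^ (2 * m + 1) / a ^ (2 * m) = a := by
      rw [pow_succ, mul_div_cancel_left₀ a (pow_ne_zero _ ha0)]
    exact hdiv ▸ hpow.div (Even.isSquare_pow (even_two_mul m) a)

theorem eq_zero_of_sq_sub_mul_sq_eq_zero {K : Type*} [Field K] {a : K} (ha : ¬IsSquare a) {x y : K}
    (h : x ^ 2 - a * y ^ 2 = 0) : x = 0 ∧ y = 0 := by
  have hy : y = 0 := by
    by_contra hy
    exact ha ⟨x / y, by field_simp; linear_combination -h⟩
  subst hy
  exact ⟨by simpa using h, rfl⟩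

theorem dvd_of_dvd_sq_sub_C_mul_sq {F : Type*} [Field F] {ξ : F} (hξ : ¬IsSquare ξ) {p : F[X]}
    (hp : Irreducible p) (hodd : Odd p.natDegree) {A B : F[X]} (h : p ∣ A ^ 2 - C ξ * B ^ 2) :
    p ∣ A ∧ p ∣ B := by
  have : Fact (Irreducible p) := ⟨hp⟩
  have hfinrank : Module.finrank F (AdjoinRoot p) = p.natDegree :=
    (AdjoinRoot.powerBasis hp.ne_zero).finrank
  have hξp : ¬IsSquare (AdjoinRoot.of p ξ) := fun hsq =>
    hξ (isSquare_of_odd_finrank (hfinrank ▸ hodd) hsq)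
  have hmk : AdjoinRoot.mk p A ^ 2 - AdjoinRoot.of p ξ * AdjoinRoot.mk p B ^ 2 = 0 := by
    simpa only [map_sub, map_mul, map_pow, AdjoinRoot.mk_C] using AdjoinRoot.mk_eq_zero.mpr h
  simpa only [AdjoinRoot.mk_eq_zero] using eq_zero_of_sq_sub_mul_sq_eq_zero hξp hmk

variable {R : Type*} [CommRing R] [IsDomain R] {p r ξ k : R}

theorem pow_dvd_of_mul_sq_sub_mul_sq_eq (hp : Prime p)
    (hξ : ∀ A B : R, p ∣ A ^ 2 - ξ * B ^ 2 → p ∣ A ∧ p ∣ B)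
    (hpr : p ∣ r) (hpr2 : ¬p ^ 2 ∣ r) (hpk : ¬p ∣ k) (n : ℕ) :
    ∀ {A B E : R}, r * (A ^ 2 - ξ * B ^ 2) = k * E ^ 2 → p ^ n ∣ E := by
  obtain ⟨s, rfl⟩ := hpr
  have hps : ¬p ∣ s := fun hs => hpr2 (by simpa only [sq] using mul_dvd_mul_left p hs)
  induction n with
  | zero => simp
  | succ n ih =>
    intro A B E h
    have hpE : p ∣ E := by
      have hdvd : p ∣ k * E ^ 2 := h ▸ (dvd_mul_right p s).mul_right _
      exact hp.dvd_of_dvd_pow ((hp.dvd_or_dvd hdvd).resolve_left hpk)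
    obtain ⟨E, rfl⟩ := hpE
    have hform : p ∣ A ^ 2 - ξ * B ^ 2 := by
      refine (hp.dvd_or_dvd ⟨k * E ^ 2, ?_⟩).resolve_left hps
      exact mul_left_cancel₀ hp.ne_zero (by linear_combination h)
    obtain ⟨⟨A, rfl⟩, ⟨B, rfl⟩⟩ := hξ A B hform
    have hdescent : p * s * (A ^ 2 - ξ * B ^ 2) = k * E ^ 2 :=
      mul_left_cancel₀ (pow_ne_zero 2 hp.ne_zero) (by linear_combination h)
    rw [pow_succ']
    exact mul_dvd_mul_left p (ih hdescent)

theorem mul_sq_sub_mul_sq_ne_algebraMap [WfDvdMonoid R] (K : Type*) [Field K] [Algebra R K]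
    [IsFractionRing R K] (hp : Prime p) (hξ : ∀ A B : R, p ∣ A ^ 2 - ξ * B ^ 2 → p ∣ A ∧ p ∣ B)
    (hpr : p ∣ r) (hpr2 : ¬p ^ 2 ∣ r) (hpk : ¬p ∣ k) (x y : K) :
    algebraMap R K r * (x ^ 2 - algebraMap R K ξ * y ^ 2) ≠ algebraMap R K k := by
  intro h
  obtain ⟨A, B, E, hA, hB⟩ := IsLocalization.surj₂ (nonZeroDivisors R) K x y
  have hcleared : r * (A ^ 2 - ξ * B ^ 2) = k * (E : R) ^ 2 := by
    apply IsFractionRing.injective R K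
    simp only [map_mul, map_sub, map_pow, ← hA, ← hB]
    linear_combination algebraMap R K E ^ 2 * h
  obtain ⟨n, hn⟩ :=
    FiniteMultiplicity.of_not_isUnit hp.not_isUnit (nonZeroDivisors.ne_zero E.property)
  exact hn (pow_dvd_of_mul_sq_sub_mul_sq_eq hp hξ hpr hpr2 hpk (n + 1) hcleared)

end QuadraticForm

section QuaternionAlgebra

variable {R : Type*} [CommRing R] {a b : R}

/-- The reduced norm `x ↦ x * star x` of the quaternion algebra `ℍ[R,a,b]`, written out in
coordinates and bundled as a multiplicative map; where `quatNr` makes sense, the two agree by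
definition. -/
def reducedNorm : ℍ[R,a,b] →* R where
  toFun x := x.re ^ 2 - a * x.imI ^ 2 - b * x.imJ ^ 2 + a * b * x.imK ^ 2
  map_one' := by simp
  map_mul' x y := by
    simp only [QuaternionAlgebra.re_mul, QuaternionAlgebra.imI_mul, QuaternionAlgebra.imJ_mul,
      QuaternionAlgebra.imK_mul]
    ring

/-- The quaternion `x` belongs to the `T`-span of `1, i, j, k`; for `T` the polynomials inside the
rational functions this is `memLambda`. -/
def HasCoordsIn (T : Subring R) (x : ℍ[R,a,b]) : Prop :=
  x.re ∈ T ∧ x.imI ∈ T ∧ x.imJ ∈ T ∧ x.imK ∈ T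

theorem HasCoordsIn.reducedNorm_mem {T : Subring R} {x : ℍ[R,a,b]} (hx : HasCoordsIn T x)
    (ha : a ∈ T) (hb : b ∈ T) : reducedNorm x ∈ T := by
  obtain ⟨hre, hI, hJ, hK⟩ := hx
  exact T.add_mem (T.sub_mem (T.sub_mem (T.pow_mem hre 2) (T.mul_mem ha (T.pow_mem hI 2)))
    (T.mul_mem hb (T.pow_mem hJ 2))) (T.mul_mem (T.mul_mem ha hb) (T.pow_mem hK 2))

theorem re_eq_zero_and_imI_eq_zero_of_anticommute [NoZeroDivisors R] (h2 : (2 : R) ≠ 0)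
    (ha : a ≠ 0) {x : ℍ[R,a,b]} (h : x * ⟨0, 1, 0, 0⟩ = -(⟨0, 1, 0, 0⟩ * x)) :
    x.re = 0 ∧ x.imI = 0 := by
  have hre : a * x.imI = -(a * x.imI) := by simpa using congrArg QuaternionAlgebra.re h
  have hI : x.re = -x.re := by simpa using congrArg QuaternionAlgebra.imI h
  have h2re : 2 * x.re = 0 := by linear_combination hI
  have h2I : 2 * a * x.imI = 0 := by linear_combination hre
  exact ⟨(mul_eq_zero.mp h2re).resolve_left h2,
    (mul_eq_zero.mp h2I).resolve_left (mul_ne_zero h2 ha)⟩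

theorem reducedNorm_eq_of_anticommute [NoZeroDivisors R] (h2 : (2 : R) ≠ 0) (ha : a ≠ 0)
    {x : ℍ[R,a,b]} (h : x * ⟨0, 1, 0, 0⟩ = -(⟨0, 1, 0, 0⟩ * x)) :
    reducedNorm x = -(b * (x.imJ ^ 2 - a * x.imK ^ 2)) := by
  obtain ⟨hre, hI⟩ := re_eq_zero_and_imI_eq_zero_of_anticommute h2 ha h
  simp only [reducedNorm, MonoidHom.coe_mk, OneHom.coe_mk, hre, hI]
  ring

end QuaternionAlgebra

theorem mul_eq_neg_mul_of_mul_mul_eq_neg {M : Type*} [Monoid M] [HasDistribNeg M] {x y z : M}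
    (hyx : y * x = 1) (h : x * z * y = -z) : x * z = -(z * x) :=
  calc x * z = x * z * y * x := by rw [mul_assoc _ y, hyx, mul_one]
    _ = -(z * x) := by rw [h, neg_mul]

section RationalFunctions

variable {F : Type*} [Field F]

theorem exists_eq_ratFuncC_of_mul_eq_one {x y : RatFunc F}
    (hx : x ∈ (algebraMap F[X] (RatFunc F)).range) (hy : y ∈ (algebraMap F[X] (RatFunc F)).range)
    (h : x * y = 1) : ∃ c : F, c ≠ 0 ∧ x = RatFunc.C c := by
  obtain ⟨P, rfl⟩ := hx
  obtain ⟨Q, rfl⟩ := hy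
  have hPQ : P * Q = 1 := RatFunc.algebraMap_injective F (by rw [map_mul, h, map_one])
  obtain ⟨c, hc, rfl⟩ := Polynomial.isUnit_iff.mp (IsUnit.of_mul_eq_one Q hPQ)
  exact ⟨c, hc.ne_zero, RatFunc.algebraMap_C c⟩

theorem reducedNorm_ne_C_of_anticommute (h2 : (2 : F) ≠ 0) {ξ : F} (hξ : ¬IsSquare ξ) {p r : F[X]}
    (hp : Irreducible p) (hodd : Odd p.natDegree) (hpr : p ∣ r) (hpr2 : ¬p ^ 2 ∣ r)
    {γ : ℍ[RatFunc F,RatFunc.C ξ,algebraMap F[X] (RatFunc F) r]}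
    (hγ : γ * ⟨0, 1, 0, 0⟩ = -(⟨0, 1, 0, 0⟩ * γ)) {c : F} (hc : c ≠ 0) :
    reducedNorm γ ≠ RatFunc.C c := by
  intro hN
  have h2' : (2 : RatFunc F) ≠ 0 := by
    simpa only [map_ofNat] using (_root_.map_ne_zero (RatFunc.C (K := F))).mpr h2
  have hξ0 : RatFunc.C ξ ≠ 0 :=
    (_root_.map_ne_zero RatFunc.C).mpr fun h => hξ (h ▸ IsSquare.zero)
  have hpc : ¬p ∣ C (-c) := fun h =>
    hp.not_isUnit (isUnit_of_dvd_unit h (isUnit_C.mpr (neg_ne_zero.mpr hc).isUnit))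
  refine mul_sq_sub_mul_sq_ne_algebraMap (RatFunc F) hp.prime
    (fun A B => dvd_of_dvd_sq_sub_C_mul_sq hξ hp hodd) hpr hpr2 hpc γ.imJ γ.imK ?_
  rw [RatFunc.algebraMap_C, RatFunc.algebraMap_C, map_neg, ← hN,
    reducedNorm_eq_of_anticommute h2' hξ0 hγ, neg_neg]

theorem no_anticommuting_unit_general (h2 : (2 : F) ≠ 0) {ξ : F} (hξ : ¬IsSquare ξ) {p r : F[X]}
    (hp : Irreducible p) (hodd : Odd p.natDegree) (hpr : p ∣ r) (hpr2 : ¬p ^ 2 ∣ r) :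
    let i : ℍ[RatFunc F,RatFunc.C ξ,algebraMap F[X] (RatFunc F) r] := ⟨0, 1, 0, 0⟩
    (¬∃ γ : ℍ[RatFunc F,RatFunc.C ξ,algebraMap F[X] (RatFunc F) r],
        γ * i = -(i * γ) ∧ ∃ c : F, c ≠ 0 ∧ reducedNorm γ = RatFunc.C c) ∧
      ¬∃ γ δ : ℍ[RatFunc F,RatFunc.C ξ,algebraMap F[X] (RatFunc F) r],
        HasCoordsIn (algebraMap F[X] (RatFunc F)).range γ ∧
          HasCoordsIn (algebraMap F[X] (RatFunc F)).range δ ∧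
            γ * δ = 1 ∧ δ * γ = 1 ∧ γ * i * δ = -i := by
  intro i
  refine ⟨fun ⟨γ, hγ, c, hc, hN⟩ =>
    reducedNorm_ne_C_of_anticommute h2 hξ hp hodd hpr hpr2 hγ hc hN, ?_⟩
  rintro ⟨γ, δ, hγ, hδ, hγδ, hδγ, hconj⟩
  have hξmem : RatFunc.C ξ ∈ (algebraMap F[X] (RatFunc F)).range := ⟨C ξ, RatFunc.algebraMap_C ξ⟩
  have hrmem : algebraMap F[X] (RatFunc F) r ∈ (algebraMap F[X] (RatFunc F)).range := ⟨r, rfl⟩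
  have hnorm : reducedNorm γ * reducedNorm δ = 1 := by rw [← map_mul, hγδ, map_one]
  obtain ⟨c, hc, hN⟩ := exists_eq_ratFuncC_of_mul_eq_one (hγ.reducedNorm_mem hξmem hrmem)
    (hδ.reducedNorm_mem hξmem hrmem) hnorm
  exact reducedNorm_ne_C_of_anticommute h2 hξ hp hodd hpr hpr2
    (mul_eq_neg_mul_of_mul_mul_eq_neg hδγ hconj) hc hN

end RationalFunctions

theorem not_sq_dvd_prod_of_monic_irreducible {F : Type*} [Field F] {S : Finset F[X]}
    (hS : ∀ f ∈ S, f.Monic ∧ Irreducible f) {p : F[X]} (hp : p ∈ S) : ¬p ^ 2 ∣ ∏ f ∈ S, f := by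
  have hsf : Squarefree (∏ f ∈ S, f) := by
    refine Finset.squarefree_prod_of_pairwise_isCoprime (fun f hf g hg hfg => ?_)
      fun f hf => (hS f hf).2.squarefree
    refine (hS f hf).2.isRelPrime_iff_not_dvd.mpr fun hdvd => hfg ?_
    exact eq_of_monic_of_associated (hS f hf).1 (hS g hg).1
      ((hS f hf).2.associated_of_dvd (hS g hg).2 hdvd)
  exact fun h => (hS p hp).2.not_isUnit (hsf p (sq p ▸ h))

theorem two_ne_zero_of_odd_card {F : Type*} [Field F] [Fintype F] (hodd : Odd (Fintype.card F)) :
    (2 : F) ≠ 0 :=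
  Ring.two_ne_zero fun h =>
    Nat.not_even_iff_odd.mpr hodd (Nat.even_iff.mpr (FiniteField.even_card_iff_char_two.mp h))

/-- Let `q` be an odd prime power, `ξ ∈ 𝔽_q^×` a non-square, and
`𝔯 ∈ 𝔽_q[T]` a product of at least one and finitely many pairwise distinct monic
irreducible polynomials of odd degree.  Then no `γ ∈ H(ξ,𝔯)` satisfies both
`γ·i = −(i·γ)` and `Nr(γ) ∈ 𝔽_q^×`.  In particular, `i` and `−i` are not conjugate
by any unit of the `𝔽_q[T]`-order `Λ`. -/
theorem no_anticommuting_unit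
    (Fq : Type*) [Field Fq] [Fintype Fq] (hodd : Odd (Fintype.card Fq))
    (ξ : Fq) (hξ : ξ ≠ 0) (hns : ¬ ∃ u : Fq, u ^ 2 = ξ)
    (S : Finset (Polynomial Fq)) (hS : S.Nonempty)
    (hSmi : ∀ f ∈ S, f.Monic ∧ Irreducible f ∧ Odd f.natDegree)
    (r : Polynomial Fq) (hr : r = ∏ f ∈ S, f) :
    let i : ℍ[RatFunc Fq, RatFunc.C ξ, algebraMap (Polynomial Fq) (RatFunc Fq) r] :=
      ⟨0, 1, 0, 0⟩
    (¬ ∃ γ : ℍ[RatFunc Fq, RatFunc.C ξ, algebraMap (Polynomial Fq) (RatFunc Fq) r],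
        γ * i = -(i * γ) ∧
        ∃ c : Fq, c ≠ 0 ∧
          quatNr (RatFunc.C ξ) (algebraMap (Polynomial Fq) (RatFunc Fq) r) γ
            = RatFunc.C c) ∧
    ¬ ∃ γ δ : ℍ[RatFunc Fq, RatFunc.C ξ, algebraMap (Polynomial Fq) (RatFunc Fq) r],
        memLambda γ ∧ memLambda δ ∧ γ * δ = 1 ∧ δ * γ = 1 ∧ γ * i * δ = -i := by
  obtain ⟨p, hpS⟩ := hS
  exact no_anticommuting_unit_general (two_ne_zero_of_odd_card hodd)
    (by simpa only [isSquare_iff_exists_sq, eq_comm] using hns) (hSmi p hpS).2.1 (hSmi p hpS).2.2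
    (hr ▸ Finset.dvd_prod_of_mem _ hpS)
    (hr ▸ not_sq_dvd_prod_of_monic_irreducible (fun f hf => (hSmi f hf).imp_right And.left) hpS)
end

section
/- Let q be an odd prime power, F = 𝔽_q(T), ξ ∈ 𝔽_q^× a non-square in 𝔽_q, and let α₁ ≠ α₂ ∈ 𝔽_q with 𝔯 = (T − α₁)(T − α₂). Let Λ be the 𝔽_q[T]-subalgebra of H(ξ,𝔯) spanned by 1, i, j, k. Set θ₁ := i and θ₂ := b₀·i + d₀·k, where b₀ = (2T − (α₁ + α₂))/(α₁ − α₂) and d₀ = −2/(α₁ − α₂). Then the group Λ^× of invertible elements of Λ is generated by the elements of the form a + b·θ₁ and a + b·θ₂ with a, b ∈ 𝔽_q not both zero. -/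
open Quaternion Polynomial

/-!
Write `x ∈ Λ` as `x = z + w j` with `z, w ∈ K(√ξ)[T]`, so that its norm is `N z - 𝔯 N w`. If `x` is
a unit, its norm is constant; if moreover `deg w = m`, then, `N` being anisotropic over `K`, `z` has
degree `m + 1` and its leading coefficient has the same norm as that of `w`. By Hilbert 90, left
multiplication by some element of `K(θ₁)ˣ` makes the leading coefficient of `z` the conjugate of
that of `w`. Then the coefficient of degree `2m + 1` in the norm being zero says that some
`A + θ₂` with `A ∈ K` multiplies `x` into an element with `deg w < m`. Descending in this way one
reaches `w = 0`, where a unit lies in `K(θ₁)ˣ`.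
-/

section QuaternionAlgebra

variable {k R S : Type*} [CommRing R] [CommRing S]

/-- The reduced norm of a quaternion algebra over a commutative ring. -/
def quaternionNorm {a b : R} : ℍ[R,a,b] →* R where
  toFun x := x.re ^ 2 - a * x.imI ^ 2 - b * (x.imJ ^ 2 - a * x.imK ^ 2)
  map_one' := by simp
  map_mul' x y := by
    simp only [QuaternionAlgebra.re_mul, QuaternionAlgebra.imI_mul, QuaternionAlgebra.imJ_mul,
      QuaternionAlgebra.imK_mul]
    ring

theorem quaternionNorm_apply {a b : R} (x : ℍ[R,a,b]) :
    quaternionNorm x = x.re ^ 2 - a * x.imI ^ 2 - b * (x.imJ ^ 2 - a * x.imK ^ 2) :=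
  rfl

/-- Change of coefficients of a quaternion algebra along `f`. The structure constants of the target
are only required to be propositionally equal to the images of those of the source. -/
def quaternionMap [CommRing k] [Algebra k R] [Algebra k S] (f : R →ₐ[k] S) {a b : R} {a' b' : S}
    (ha : f a = a') (hb : f b = b') : ℍ[R,a,b] →ₐ[k] ℍ[S,a',b'] where
  toFun x := ⟨f x.re, f x.imI, f x.imJ, f x.imK⟩
  map_one' := by ext <;> simp
  map_mul' x y := by ext <;> simp [← ha, ← hb]
  map_zero' := by ext <;> simp
  map_add' x y := by ext <;> simp
  commutes' c := by
    ext
    · exact f.commutes c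
    all_goals exact map_zero f

theorem quaternionMap_injective [CommRing k] [Algebra k R] [Algebra k S] {f : R →ₐ[k] S}
    (hf : Function.Injective f) {a b : R} {a' b' : S} (ha : f a = a') (hb : f b = b') :
    Function.Injective (quaternionMap f ha hb) := fun _ _ hxy =>
  have ⟨hre, hi, hj, hk⟩ := QuaternionAlgebra.ext_iff.mp hxy
  QuaternionAlgebra.ext (hf hre) (hf hi) (hf hj) (hf hk)

theorem mem_range_quaternionMap [CommRing k] [Algebra k R] [Algebra k S] {f : R →ₐ[k] S}
    {a b : R} {a' b' : S} (ha : f a = a') (hb : f b = b') {x : ℍ[S,a',b']} :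
    x ∈ (quaternionMap f ha hb).range ↔
      x.re ∈ f.range ∧ x.imI ∈ f.range ∧ x.imJ ∈ f.range ∧ x.imK ∈ f.range := by
  constructor
  · rintro ⟨y, rfl⟩
    exact ⟨⟨_, rfl⟩, ⟨_, rfl⟩, ⟨_, rfl⟩, ⟨_, rfl⟩⟩
  · rintro ⟨⟨p, hp⟩, ⟨q, hq⟩, ⟨s, hs⟩, ⟨t, ht⟩⟩
    exact ⟨⟨p, q, s, t⟩, QuaternionAlgebra.ext hp hq hs ht⟩

end QuaternionAlgebra

section TorsionGenerators

variable {K A B : Type*} [Field K] [Ring A] [Algebra K A] [Ring B] [Algebra K B]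

/-- The nonzero elements of `K + Kθ₁` and of `K + Kθ₂`; when `θ₁² = θ₂²` is a non-square of `K`,
these are the multiplicative groups of two copies of a quadratic extension of `K`. -/
def torsionGenerators (K : Type*) [Field K] {A : Type*} [Ring A] [Algebra K A] (θ₁ θ₂ : A) :
    Set A :=
  {x | ∃ a b : K, ¬ (a = 0 ∧ b = 0) ∧
    (x = algebraMap K A a + algebraMap K A b * θ₁ ∨ x = algebraMap K A a + algebraMap K A b * θ₂)}

theorem image_torsionGenerators (φ : A →ₐ[K] B) (θ₁ θ₂ : A) :
    φ '' torsionGenerators K θ₁ θ₂ = torsionGenerators K (φ θ₁) (φ θ₂) := by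
  ext y
  constructor
  · rintro ⟨x, ⟨a, b, hab, rfl | rfl⟩, rfl⟩
    · exact ⟨a, b, hab, .inl (by simp)⟩
    · exact ⟨a, b, hab, .inr (by simp)⟩
  · rintro ⟨a, b, hab, rfl | rfl⟩
    · exact ⟨_, ⟨a, b, hab, .inl rfl⟩, by simp⟩
    · exact ⟨_, ⟨a, b, hab, .inr rfl⟩, by simp⟩

theorem sq_sub_mul_sq_eq_zero_iff_s15 {ξ : K} (hξ : ¬ IsSquare ξ) {a b : K} :
    a ^ 2 - ξ * b ^ 2 = 0 ↔ a = 0 ∧ b = 0 := by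
  refine ⟨fun h => ?_, by rintro ⟨rfl, rfl⟩; simp⟩
  have hb : b = 0 := by
    by_contra hb
    exact hξ ⟨a / b, by field_simp; linear_combination -h⟩
  subst hb
  simpa using h

theorem algebraMap_add_mul_mul {R : Type*} [CommRing R] [Algebra R A] {ξ : R} {θ : A}
    (hθ : θ * θ = algebraMap R A ξ) (a b c d : R) :
    (algebraMap R A a + algebraMap R A b * θ) * (algebraMap R A c + algebraMap R A d * θ) =
      algebraMap R A (a * c + ξ * (b * d)) + algebraMap R A (a * d + b * c) * θ := by
  simp only [Algebra.algebraMap_eq_smul_one, smul_mul_assoc, one_mul] at hθ ⊢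
  simp only [add_mul, mul_add, smul_mul_assoc, mul_smul_comm, hθ, mul_one, one_mul]
  module

theorem exists_inv_of_mul_self_eq {ξ : K} (hξ : ¬ IsSquare ξ) {θ : A}
    (hθ : θ * θ = algebraMap K A ξ) {a b : K} (hab : ¬ (a = 0 ∧ b = 0)) :
    ∃ c d : K, ¬ (c = 0 ∧ d = 0) ∧
      (algebraMap K A a + algebraMap K A b * θ) * (algebraMap K A c + algebraMap K A d * θ) = 1 ∧
      (algebraMap K A c + algebraMap K A d * θ) * (algebraMap K A a + algebraMap K A b * θ) =
        1 := by
  have hN : a ^ 2 - ξ * b ^ 2 ≠ 0 := mt (sq_sub_mul_sq_eq_zero_iff_s15 hξ).mp hab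
  obtain ⟨c, d, hre, him⟩ : ∃ c d : K, a * c + ξ * (b * d) = 1 ∧ a * d + b * c = 0 :=
    ⟨a / (a ^ 2 - ξ * b ^ 2), -b / (a ^ 2 - ξ * b ^ 2), by field_simp; ring, by field_simp; ring⟩
  refine ⟨c, d, fun ⟨hc, hd⟩ => by simp [hc, hd] at hre, ?_, ?_⟩
  · rw [algebraMap_add_mul_mul hθ, hre, him, map_one, map_zero, zero_mul, add_zero]
  · rw [algebraMap_add_mul_mul hθ, mul_comm c, mul_comm d b, hre, add_comm, mul_comm d, mul_comm c,
      add_comm (b * c), him, map_one, map_zero, zero_mul, zero_add]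

theorem exists_inv_mem_torsionGenerators {ξ : K} (hξ : ¬ IsSquare ξ) {θ₁ θ₂ : A}
    (hθ₁ : θ₁ * θ₁ = algebraMap K A ξ) (hθ₂ : θ₂ * θ₂ = algebraMap K A ξ) {x : A}
    (hx : x ∈ torsionGenerators K θ₁ θ₂) :
    ∃ y ∈ torsionGenerators K θ₁ θ₂, x * y = 1 ∧ y * x = 1 := by
  obtain ⟨a, b, hab, rfl | rfl⟩ := hx
  · obtain ⟨c, d, hcd, hinv⟩ := exists_inv_of_mul_self_eq hξ hθ₁ hab
    exact ⟨_, ⟨c, d, hcd, .inl rfl⟩, hinv⟩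
  · obtain ⟨c, d, hcd, hinv⟩ := exists_inv_of_mul_self_eq hξ hθ₂ hab
    exact ⟨_, ⟨c, d, hcd, .inr rfl⟩, hinv⟩

theorem isUnit_of_mem_torsionGenerators {ξ : K} (hξ : ¬ IsSquare ξ) {θ₁ θ₂ : A}
    (hθ₁ : θ₁ * θ₁ = algebraMap K A ξ) (hθ₂ : θ₂ * θ₂ = algebraMap K A ξ) {x : A}
    (hx : x ∈ torsionGenerators K θ₁ θ₂) : IsUnit x :=
  have ⟨y, _, hxy, hyx⟩ := exists_inv_mem_torsionGenerators hξ hθ₁ hθ₂ hx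
  ⟨⟨x, y, hxy, hyx⟩, rfl⟩

theorem mem_closure_torsionGenerators_of_mul_mem {ξ : K} (hξ : ¬ IsSquare ξ) {θ₁ θ₂ : A}
    (hθ₁ : θ₁ * θ₁ = algebraMap K A ξ) (hθ₂ : θ₂ * θ₂ = algebraMap K A ξ) {g x : A}
    (hg : g ∈ torsionGenerators K θ₁ θ₂)
    (hgx : g * x ∈ Submonoid.closure (torsionGenerators K θ₁ θ₂)) :
    x ∈ Submonoid.closure (torsionGenerators K θ₁ θ₂) := by
  obtain ⟨h, hh, -, hhg⟩ := exists_inv_mem_torsionGenerators hξ hθ₁ hθ₂ hg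
  rw [← one_mul x, ← hhg, mul_assoc]
  exact mul_mem (Submonoid.subset_closure hh) hgx

end TorsionGenerators

section PolynomialNorm

theorem degree_lt_of_natDegree_le_of_coeff_eq_zero {R : Type*} [Semiring R] {p : R[X]} {n : ℕ}
    (hp : p.natDegree ≤ n) (hn : p.coeff n = 0) : p.degree < n :=
  (degree_le_of_natDegree_le hp).lt_of_ne fun h => coeff_ne_zero_of_eq_degree h hn

theorem natDegree_quaternionNorm_eq_zero_of_isUnit {R : Type*} [CommRing R] [NoZeroDivisors R]
    {a b : R[X]} {x : ℍ[R[X],a,b]} (hx : IsUnit x) : (quaternionNorm x).natDegree = 0 :=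
  natDegree_eq_zero_of_isUnit (hx.map quaternionNorm)

theorem coeff_sq_sub_mul_sq {R : Type*} [CommRing R] (ξ : R) {p q : R[X]} {n : ℕ}
    (hp : p.natDegree ≤ n) (hq : q.natDegree ≤ n) :
    (p ^ 2 - C ξ * q ^ 2).coeff (2 * n) = p.coeff n ^ 2 - ξ * q.coeff n ^ 2 := by
  rw [coeff_sub, coeff_C_mul, coeff_pow_of_natDegree_le hp, coeff_pow_of_natDegree_le hq]

theorem natDegree_sq_sub_mul_sq_le {R : Type*} [CommRing R] (ξ : R) {p q : R[X]} {n : ℕ}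
    (hp : p.natDegree ≤ n) (hq : q.natDegree ≤ n) :
    (p ^ 2 - C ξ * q ^ 2).natDegree ≤ 2 * n :=
  natDegree_sub_le_iff_left ((natDegree_C_mul_le _ _).trans (natDegree_pow_le_of_le 2 hq)) |>.mpr
    (natDegree_pow_le_of_le 2 hp)

variable {K : Type*} [Field K] {ξ : K}

theorem natDegree_le_of_natDegree_sq_sub_mul_sq_le (hξ : ¬ IsSquare ξ) {p q : K[X]} {n : ℕ}
    (h : (p ^ 2 - C ξ * q ^ 2).natDegree ≤ 2 * n) : p.natDegree ≤ n ∧ q.natDegree ≤ n := by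
  by_contra hn
  obtain ⟨d, hd⟩ : ∃ d, max p.natDegree q.natDegree = d := ⟨_, rfl⟩
  have htop : p.coeff d ^ 2 - ξ * q.coeff d ^ 2 = 0 := by
    rw [← coeff_sq_sub_mul_sq ξ (by omega) (by omega)]
    exact coeff_eq_zero_of_natDegree_lt (by omega)
  obtain ⟨hp, hq⟩ := (sq_sub_mul_sq_eq_zero_iff_s15 hξ).mp htop
  have hp' : p.natDegree ≤ d - 1 := natDegree_le_pred (by omega) hp
  have hq' : q.natDegree ≤ d - 1 := natDegree_le_pred (by omega) hq
  omega

-- Write `z = a + b√ξ` and `w = c + d√ξ`. As `N z = N w`, Hilbert 90 provides `g = u + v√ξ` with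
-- `g z = star (g w)`: take `g = star (z + w)`, or `g = -√ξ * star w` when `z + w = 0`.
theorem exists_mul_eq_star_mul (hξ : ξ ≠ 0) {a b c d : K} (hcd : ¬ (c = 0 ∧ d = 0))
    (h : a ^ 2 - ξ * b ^ 2 = c ^ 2 - ξ * d ^ 2) :
    ∃ u v : K, ¬ (u = 0 ∧ v = 0) ∧
      u * a + ξ * v * b = u * c + ξ * v * d ∧ u * b + v * a = -(u * d + v * c) := by
  by_cases h0 : a + c = 0 ∧ b + d = 0
  · obtain ⟨hac, hbd⟩ := h0
    refine ⟨ξ * d, -c, fun ⟨hd, hc⟩ => hcd ⟨by simpa using hc, by simpa [hξ] using hd⟩, ?_, ?_⟩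
    · linear_combination (ξ * d) * hac - ξ * c * hbd
    · linear_combination (ξ * d) * hbd - c * hac
  · refine ⟨a + c, -(b + d), by rwa [neg_eq_zero], ?_, ?_⟩
    · linear_combination h
    · ring

theorem exists_mul_eq_and_mul_eq {c d v₁ v₂ : K} (hcd : ¬ (c = 0 ∧ d = 0))
    (h : c * v₁ = ξ * (d * v₂)) : ∃ A : K, A * c = ξ * v₂ ∧ A * d = v₁ := by
  by_cases hd : d = 0
  · subst hd
    have hc : c ≠ 0 := by simpa using hcd
    have hv₁ : v₁ = 0 := by simpa [hc] using h
    exact ⟨ξ * v₂ / c, by field_simp, by simp [hv₁]⟩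
  · exact ⟨v₁ / d, by field_simp; linear_combination h, by field_simp⟩

theorem not_and_mul_eq_zero (hξ : ¬ IsSquare ξ) {a b c d : K} (hab : ¬ (a = 0 ∧ b = 0))
    (hcd : ¬ (c = 0 ∧ d = 0)) : ¬ (a * c + ξ * b * d = 0 ∧ a * d + b * c = 0) := by
  rw [← sq_sub_mul_sq_eq_zero_iff_s15 hξ] at *
  rw [show (a * c + ξ * b * d) ^ 2 - ξ * (a * d + b * c) ^ 2 =
    (a ^ 2 - ξ * b ^ 2) * (c ^ 2 - ξ * d ^ 2) by ring]
  exact mul_ne_zero hab hcd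

theorem natDegree_re_le_and_natDegree_imI_le (hξ : ¬ IsSquare ξ) {r : K[X]} {x : ℍ[K[X],C ξ,r]}
    {d m : ℕ} (hr : r.natDegree ≤ 2 * d) (hx : (quaternionNorm x).natDegree = 0)
    (hJ : x.imJ.natDegree ≤ m) (hK : x.imK.natDegree ≤ m) :
    x.re.natDegree ≤ m + d ∧ x.imI.natDegree ≤ m + d := by
  have hw : (x.imJ ^ 2 - C ξ * x.imK ^ 2).natDegree ≤ 2 * m := natDegree_sq_sub_mul_sq_le ξ hJ hK
  refine natDegree_le_of_natDegree_sq_sub_mul_sq_le hξ ?_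
  rw [quaternionNorm_apply] at hx
  rw [← sub_add_cancel (x.re ^ 2 - C ξ * x.imI ^ 2) (r * (x.imJ ^ 2 - C ξ * x.imK ^ 2))]
  exact natDegree_add_le_of_degree_le (by omega)
    ((natDegree_mul_le_of_le hr hw).trans (by omega))

theorem coeff_re_sq_sub_mul_coeff_imI_sq (hξ : ¬ IsSquare ξ) {r : K[X]} {x : ℍ[K[X],C ξ,r]}
    {d m : ℕ} (hr : r.natDegree ≤ 2 * d) (hd : 0 < d) (hx : (quaternionNorm x).natDegree = 0)
    (hJ : x.imJ.natDegree ≤ m) (hK : x.imK.natDegree ≤ m) :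
    x.re.coeff (m + d) ^ 2 - ξ * x.imI.coeff (m + d) ^ 2 =
      r.coeff (2 * d) * (x.imJ.coeff m ^ 2 - ξ * x.imK.coeff m ^ 2) := by
  obtain ⟨hre, hI⟩ := natDegree_re_le_and_natDegree_imI_le hξ hr hx hJ hK
  have hw : (x.imJ ^ 2 - C ξ * x.imK ^ 2).natDegree ≤ 2 * m := natDegree_sq_sub_mul_sq_le ξ hJ hK
  have htop : (quaternionNorm x).coeff (2 * (m + d)) = 0 :=
    coeff_eq_zero_of_natDegree_lt (by omega)
  rw [quaternionNorm_apply, coeff_sub, coeff_sq_sub_mul_sq ξ hre hI, mul_add, add_comm (2 * m),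
    coeff_mul_add_eq_of_natDegree_le hr hw, coeff_sq_sub_mul_sq ξ hJ hK] at htop
  exact sub_eq_zero.mp htop

end PolynomialNorm

section Order

variable {K : Type*} [Field K]

/-- The order `Λ`, as the quaternion algebra over `K[T]` with the structure constants of `H(ξ,𝔯)`,
`𝔯 = (T - α₁)(T - α₂)`. -/
abbrev LambdaOrder (ξ α₁ α₂ : K) : Type _ :=
  ℍ[K[X],C ξ,(X - C α₁) * (X - C α₂)]

namespace LambdaOrder

/-- The element `θ₁ = i` of `Λ`. -/
noncomputable def theta₁ (ξ α₁ α₂ : K) : LambdaOrder ξ α₁ α₂ :=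
  ⟨0, 1, 0, 0⟩

/-- The element `θ₂ = b₀ i + d₀ k` of `Λ`. -/
noncomputable def theta₂ (ξ α₁ α₂ : K) : LambdaOrder ξ α₁ α₂ :=
  ⟨0, C (α₁ - α₂)⁻¹ * (2 * X - C (α₁ + α₂)), 0, C (-(2) * (α₁ - α₂)⁻¹)⟩

variable {ξ α₁ α₂ : K}

theorem algebraMap_eq_mk (a : K) :
    algebraMap K (LambdaOrder ξ α₁ α₂) a = ⟨C a, 0, 0, 0⟩ := rfl

theorem theta₁_mul_self :
    theta₁ ξ α₁ α₂ * theta₁ ξ α₁ α₂ = algebraMap K (LambdaOrder ξ α₁ α₂) ξ := by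
  ext1 <;> simp [theta₁, algebraMap_eq_mk]

theorem theta₂_mul_self (hα : α₁ ≠ α₂) :
    theta₂ ξ α₁ α₂ * theta₂ ξ α₁ α₂ = algebraMap K (LambdaOrder ξ α₁ α₂) ξ := by
  have hδ : C (α₁ - α₂)⁻¹ * (C α₁ - C α₂) = (1 : K[X]) := by
    rw [← C_sub, ← C_mul, inv_mul_cancel₀ (sub_ne_zero.mpr hα), C_1]
  rw [algebraMap_eq_mk, theta₂, QuaternionAlgebra.mk_mul_mk]
  ext1 <;> simp only [map_add, map_mul, map_neg, map_ofNat, zero_mul, mul_zero, add_zero, zero_add,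
    sub_zero]
  · linear_combination C ξ * (C (α₁ - α₂)⁻¹ * (C α₁ - C α₂) + 1) * hδ
  · ring

theorem algebraMap_add_mul_theta₁_mul (u v : K) (x : LambdaOrder ξ α₁ α₂) :
    (algebraMap K _ u + algebraMap K _ v * theta₁ ξ α₁ α₂) * x =
      ⟨C u * x.re + C (ξ * v) * x.imI, C u * x.imI + C v * x.re,
        C u * x.imJ + C (ξ * v) * x.imK, C u * x.imK + C v * x.imJ⟩ := by
  ext1 <;> simp [theta₁, algebraMap_eq_mk]

theorem imJ_algebraMap_add_theta₂_mul (A : K) (x : LambdaOrder ξ α₁ α₂) :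
    ((algebraMap K _ ((α₁ - α₂)⁻¹ * A) + algebraMap K _ 1 * theta₂ ξ α₁ α₂) * x).imJ =
      C (α₁ - α₂)⁻¹ *
        (C A * x.imJ - C ξ * (C (α₁ + α₂) * x.imK - C 2 * (X * x.imK + x.imI))) := by
  simp only [theta₂, algebraMap_eq_mk, QuaternionAlgebra.mk_mul_mk, QuaternionAlgebra.mk_add_mk,
    QuaternionAlgebra.imJ_mul, map_add, map_mul, map_neg, map_ofNat, C_1]
  ring

theorem imK_algebraMap_add_theta₂_mul (A : K) (x : LambdaOrder ξ α₁ α₂) :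
    ((algebraMap K _ ((α₁ - α₂)⁻¹ * A) + algebraMap K _ 1 * theta₂ ξ α₁ α₂) * x).imK =
      C (α₁ - α₂)⁻¹ * (C A * x.imK - (C (α₁ + α₂) * x.imJ - C 2 * (X * x.imJ - x.re))) := by
  simp only [theta₂, algebraMap_eq_mk, QuaternionAlgebra.mk_mul_mk, QuaternionAlgebra.mk_add_mk,
    QuaternionAlgebra.imK_mul, map_add, map_mul, map_neg, map_ofNat, C_1]
  ring

theorem natDegree_structureConstant_le : ((X - C α₁) * (X - C α₂)).natDegree ≤ 2 := by
  compute_degree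

theorem coeff_two_structureConstant : ((X - C α₁) * (X - C α₂)).coeff 2 = 1 := by
  rw [coeff_mul_add_eq_of_natDegree_le (df := 1) (dg := 1) (by compute_degree) (by compute_degree)]
  simp

-- The coefficient of degree `2m + 1` in the norm vanishes, its terms of degree `2m + 2` cancelling.
theorem coeff_mul_eq_of_natDegree_quaternionNorm_eq_zero {x : LambdaOrder ξ α₁ α₂}
    (hx : (quaternionNorm x).natDegree = 0) {m : ℕ}
    (hJ : x.imJ.natDegree ≤ m) (hK : x.imK.natDegree ≤ m) {p q : K[X]}
    (hp : p.natDegree ≤ m) (hq : q.natDegree ≤ m)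
    (hre : x.re = X * x.imJ - p) (hI : x.imI = q - X * x.imK) :
    x.imJ.coeff m * ((α₁ + α₂) * x.imJ.coeff m - 2 * p.coeff m) =
      ξ * (x.imK.coeff m * ((α₁ + α₂) * x.imK.coeff m - 2 * q.coeff m)) := by
  have hnorm : quaternionNorm x =
      X * (x.imJ * (C (α₁ + α₂) * x.imJ - C 2 * p) -
          C ξ * (x.imK * (C (α₁ + α₂) * x.imK - C 2 * q))) +
        ((p ^ 2 - C ξ * q ^ 2) - C (α₁ * α₂) * (x.imJ ^ 2 - C ξ * x.imK ^ 2)) := by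
    rw [quaternionNorm_apply, hre, hI, C_add, C_mul, map_ofNat]
    ring
  have hlow : ((p ^ 2 - C ξ * q ^ 2) - C (α₁ * α₂) * (x.imJ ^ 2 - C ξ * x.imK ^ 2)).natDegree
      ≤ 2 * m :=
    (natDegree_sub_le_iff_left ((natDegree_C_mul_le _ _).trans
      (natDegree_sq_sub_mul_sq_le ξ hJ hK))).mpr (natDegree_sq_sub_mul_sq_le ξ hp hq)
  have htop : (quaternionNorm x).coeff (2 * m + 1) = 0 :=
    coeff_eq_zero_of_natDegree_lt (by omega)
  have hv {c v : K[X]} (hc : c.natDegree ≤ m) (hv : v.natDegree ≤ m) :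
      (C (α₁ + α₂) * c - C 2 * v).natDegree ≤ m :=
    (natDegree_sub_le_iff_left ((natDegree_C_mul_le _ _).trans hv)).mpr
      ((natDegree_C_mul_le _ _).trans hc)
  rw [hnorm, coeff_add, coeff_eq_zero_of_natDegree_lt (hlow.trans_lt (by omega)), add_zero,
    coeff_X_mul, coeff_sub, coeff_C_mul, two_mul, coeff_mul_add_eq_of_natDegree_le hJ (hv hJ hp),
    coeff_mul_add_eq_of_natDegree_le hK (hv hK hq)] at htop
  simpa only [coeff_sub, coeff_C_mul, sub_eq_zero] using htop

theorem exists_torsion_mul_normalized (hξ : ¬ IsSquare ξ) {x : LambdaOrder ξ α₁ α₂}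
    (hx : (quaternionNorm x).natDegree = 0) {m : ℕ}
    (hJ : x.imJ.natDegree ≤ m) (hK : x.imK.natDegree ≤ m)
    (hw : ¬ (x.imJ.coeff m = 0 ∧ x.imK.coeff m = 0)) :
    ∃ g ∈ torsionGenerators K (theta₁ ξ α₁ α₂) (theta₂ ξ α₁ α₂),
      (g * x).imJ.natDegree ≤ m ∧ (g * x).imK.natDegree ≤ m ∧
      ¬ ((g * x).imJ.coeff m = 0 ∧ (g * x).imK.coeff m = 0) ∧
      (g * x).re.coeff (m + 1) = (g * x).imJ.coeff m ∧
      (g * x).imI.coeff (m + 1) = -(g * x).imK.coeff m := by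
  have hξ₀ : ξ ≠ 0 := fun h => hξ (h ▸ IsSquare.zero)
  have hnorm := coeff_re_sq_sub_mul_coeff_imI_sq (d := 1) hξ natDegree_structureConstant_le one_pos
    hx hJ hK
  rw [mul_one, coeff_two_structureConstant, one_mul] at hnorm
  obtain ⟨u, v, huv, hre, him⟩ := exists_mul_eq_star_mul hξ₀ hw hnorm
  refine ⟨_, ⟨u, v, huv, .inl rfl⟩, ?_⟩
  have hC {a b : K} {p q : K[X]} (hp : p.natDegree ≤ m) (hq : q.natDegree ≤ m) :
      (C a * p + C b * q).natDegree ≤ m :=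
    natDegree_add_le_of_degree_le ((natDegree_C_mul_le _ _).trans hp)
      ((natDegree_C_mul_le _ _).trans hq)
  rw [algebraMap_add_mul_theta₁_mul]
  refine ⟨hC hJ hK, hC hK hJ, ?_, ?_, ?_⟩
  · simpa only [coeff_add, coeff_C_mul] using not_and_mul_eq_zero hξ huv hw
  · simpa only [coeff_add, coeff_C_mul] using hre
  · simpa only [coeff_add, coeff_C_mul] using him

theorem exists_torsion_mul_degree_lt (hξ : ¬ IsSquare ξ) {x : LambdaOrder ξ α₁ α₂}
    (hx : (quaternionNorm x).natDegree = 0) {m : ℕ}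
    (hJ : x.imJ.natDegree ≤ m) (hK : x.imK.natDegree ≤ m)
    (hw : ¬ (x.imJ.coeff m = 0 ∧ x.imK.coeff m = 0))
    (hre : x.re.coeff (m + 1) = x.imJ.coeff m) (hI : x.imI.coeff (m + 1) = -x.imK.coeff m) :
    ∃ g ∈ torsionGenerators K (theta₁ ξ α₁ α₂) (theta₂ ξ α₁ α₂),
      (g * x).imJ.degree < m ∧ (g * x).imK.degree < m := by
  obtain ⟨hre', hI'⟩ := natDegree_re_le_and_natDegree_imI_le (d := 1) hξ
    natDegree_structureConstant_le hx hJ hK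
  have hX {p : K[X]} (hp : p.natDegree ≤ m) : (X * p).natDegree ≤ m + 1 := by
    rw [add_comm]
    exact natDegree_mul_le_of_le natDegree_X_le hp
  obtain ⟨p, hp⟩ : ∃ p, p = X * x.imJ - x.re := ⟨_, rfl⟩
  obtain ⟨q, hq⟩ : ∃ q, q = X * x.imK + x.imI := ⟨_, rfl⟩
  have hpm : p.natDegree ≤ m :=
    hp ▸ natDegree_le_pred ((natDegree_sub_le_iff_left hre').mpr (hX hJ)) (by simp [hre])
  have hqm : q.natDegree ≤ m :=
    hq ▸ natDegree_le_pred (natDegree_add_le_of_degree_le (hX hK) hI') (by simp [hI])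
  obtain ⟨A, hAJ, hAK⟩ := exists_mul_eq_and_mul_eq hw
    (coeff_mul_eq_of_natDegree_quaternionNorm_eq_zero hx hJ hK hpm hqm
      (by rw [hp]; ring) (by rw [hq]; ring))
  refine ⟨_, ⟨(α₁ - α₂)⁻¹ * A, 1, by simp, .inr rfl⟩, ?_⟩
  rw [imJ_algebraMap_add_theta₂_mul, imK_algebraMap_add_theta₂_mul, ← hp, ← hq]
  constructor
  · refine degree_lt_of_natDegree_le_of_coeff_eq_zero ?_ ?_
    · compute_degree
      exact max_le hJ (max_le hK hqm)
    · simp only [coeff_C_mul, coeff_sub, hAJ, sub_self, mul_zero]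
  · refine degree_lt_of_natDegree_le_of_coeff_eq_zero ?_ ?_
    · compute_degree
      exact max_le hK (max_le hJ hpm)
    · simp only [coeff_C_mul, coeff_sub, hAK, sub_self, mul_zero]

theorem mem_torsionGenerators_of_imJ_imK_eq_zero (hξ : ¬ IsSquare ξ) {x : LambdaOrder ξ α₁ α₂}
    (hx : IsUnit x) (hJ : x.imJ = 0) (hK : x.imK = 0) :
    x ∈ torsionGenerators K (theta₁ ξ α₁ α₂) (theta₂ ξ α₁ α₂) := by
  have hN : (x.re ^ 2 - C ξ * x.imI ^ 2).natDegree ≤ 2 * 0 := by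
    simpa [quaternionNorm_apply, hJ, hK] using (natDegree_quaternionNorm_eq_zero_of_isUnit hx).le
  obtain ⟨hre, hI⟩ := natDegree_le_of_natDegree_sq_sub_mul_sq_le hξ hN
  have hx' :
      x = algebraMap K _ (x.re.coeff 0) + algebraMap K _ (x.imI.coeff 0) * theta₁ ξ α₁ α₂ := by
    rw [← mul_one (_ + _), algebraMap_add_mul_theta₁_mul]
    ext1
    · simp [← eq_C_of_natDegree_le_zero hre]
    · simp [← eq_C_of_natDegree_le_zero hI]
    · simp [hJ]
    · simp [hK]
  refine ⟨_, _, fun ⟨h0, h1⟩ => hx.ne_zero ?_, .inl hx'⟩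
  rw [hx', h0, h1]
  simp

theorem mem_closure_of_degree_lt (hξ : ¬ IsSquare ξ) (hα : α₁ ≠ α₂) {x : LambdaOrder ξ α₁ α₂}
    (hx : IsUnit x) {m : ℕ} (hJ : x.imJ.degree < m) (hK : x.imK.degree < m) :
    x ∈ Submonoid.closure (torsionGenerators K (theta₁ ξ α₁ α₂) (theta₂ ξ α₁ α₂)) := by
  have isUnit_gen {g : LambdaOrder ξ α₁ α₂}
      (hg : g ∈ torsionGenerators K (theta₁ ξ α₁ α₂) (theta₂ ξ α₁ α₂)) : IsUnit g :=
    isUnit_of_mem_torsionGenerators hξ theta₁_mul_self (theta₂_mul_self hα) hg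
  have hmul {g y : LambdaOrder ξ α₁ α₂}
      (hg : g ∈ torsionGenerators K (theta₁ ξ α₁ α₂) (theta₂ ξ α₁ α₂)) :=
    mem_closure_torsionGenerators_of_mul_mem (x := y) hξ theta₁_mul_self (theta₂_mul_self hα) hg
  induction m generalizing x with
  | zero =>
    have hJ₀ : x.imJ = 0 := by simpa using hJ
    have hK₀ : x.imK = 0 := by simpa using hK
    exact Submonoid.subset_closure (mem_torsionGenerators_of_imJ_imK_eq_zero hξ hx hJ₀ hK₀)
  | succ m ih =>
    replace hJ : x.imJ.natDegree ≤ m :=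
      natDegree_le_iff_coeff_eq_zero.mpr ((degree_lt_iff_coeff_zero _ _).mp hJ)
    replace hK : x.imK.natDegree ≤ m :=
      natDegree_le_iff_coeff_eq_zero.mpr ((degree_lt_iff_coeff_zero _ _).mp hK)
    by_cases hw : x.imJ.coeff m = 0 ∧ x.imK.coeff m = 0
    · exact ih hx (degree_lt_of_natDegree_le_of_coeff_eq_zero hJ hw.1)
        (degree_lt_of_natDegree_le_of_coeff_eq_zero hK hw.2)
    obtain ⟨g, hg, hgJ, hgK, hgw, hgre, hgI⟩ :=
      exists_torsion_mul_normalized hξ (natDegree_quaternionNorm_eq_zero_of_isUnit hx) hJ hK hw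
    have hgx : IsUnit (g * x) := (isUnit_gen hg).mul hx
    obtain ⟨h, hh, hhJ, hhK⟩ :=
      exists_torsion_mul_degree_lt hξ (natDegree_quaternionNorm_eq_zero_of_isUnit hgx) hgJ hgK hgw
        hgre hgI
    exact hmul hg (hmul hh (ih ((isUnit_gen hh).mul hgx) hhJ hhK))

theorem isUnit_iff_mem_closure_torsionGenerators (hξ : ¬ IsSquare ξ) (hα : α₁ ≠ α₂)
    {x : LambdaOrder ξ α₁ α₂} :
    IsUnit x ↔
      x ∈ Submonoid.closure (torsionGenerators K (theta₁ ξ α₁ α₂) (theta₂ ξ α₁ α₂)) := by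
  refine ⟨fun hx => ?_, fun hx => ?_⟩
  · exact mem_closure_of_degree_lt hξ hα hx (m := max x.imJ.natDegree x.imK.natDegree + 1)
      (degree_le_natDegree.trans_lt (by exact_mod_cast Nat.lt_succ_of_le (le_max_left _ _)))
      (degree_le_natDegree.trans_lt (by exact_mod_cast Nat.lt_succ_of_le (le_max_right _ _)))
  · have hle : Submonoid.closure (torsionGenerators K (theta₁ ξ α₁ α₂) (theta₂ ξ α₁ α₂)) ≤
        IsUnit.submonoid _ := (Submonoid.closure_le).mpr fun _ =>
      isUnit_of_mem_torsionGenerators hξ theta₁_mul_self (theta₂_mul_self hα)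
    exact hle hx

end LambdaOrder

end Order

section RatFunc

variable {K : Type*} [Field K]

theorem mem_range_and_inv_mem_range_iff {k R S : Type*} [CommSemiring k] [Semiring R]
    [Semiring S] [Algebra k R] [Algebra k S] {φ : R →ₐ[k] S} (hφ : Function.Injective φ) {y : S} :
    (y ∈ φ.range ∧ ∃ z ∈ φ.range, y * z = 1 ∧ z * y = 1) ↔ ∃ x, IsUnit x ∧ φ x = y := by
  constructor
  · rintro ⟨⟨x, rfl⟩, _, ⟨x', rfl⟩, hxx', hx'x⟩
    exact ⟨x, ⟨⟨x, x', hφ (by simpa using hxx'), hφ (by simpa using hx'x)⟩, rfl⟩, rfl⟩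
  · rintro ⟨_, ⟨u, rfl⟩, rfl⟩
    exact ⟨⟨u, rfl⟩, φ ↑u⁻¹, ⟨_, rfl⟩, by simp [← map_mul], by simp [← map_mul]⟩

/-- The inclusion of `Λ` into `H(ξ,𝔯)`. -/
noncomputable def LambdaOrder.toRatFunc (ξ α₁ α₂ : K) :
    LambdaOrder ξ α₁ α₂ →ₐ[K]
      ℍ[RatFunc K,RatFunc.C ξ,algebraMap K[X] (RatFunc K) ((X - C α₁) * (X - C α₂))] :=
  quaternionMap (IsScalarTower.toAlgHom K K[X] (RatFunc K))
    (by rw [IsScalarTower.coe_toAlgHom', RatFunc.algebraMap_C])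
    (by rw [IsScalarTower.coe_toAlgHom'])

theorem lambda_units_generated_by_torsion_general
    (K : Type*) [Field K] (ξ : K) (hns : ¬ ∃ u : K, u ^ 2 = ξ) (α₁ α₂ : K) (hα : α₁ ≠ α₂) :
    let r : K[X] := (X - C α₁) * (X - C α₂)
    let H := ℍ[RatFunc K,RatFunc.C ξ,algebraMap K[X] (RatFunc K) r]
    let θ₁ : H := ⟨0, 1, 0, 0⟩
    let b₀ : K[X] := C (α₁ - α₂)⁻¹ * (2 * X - C (α₁ + α₂))
    let d₀ : K[X] := C (-(2) * (α₁ - α₂)⁻¹)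
    let θ₂ : H := ⟨0, algebraMap K[X] (RatFunc K) b₀, 0, algebraMap K[X] (RatFunc K) d₀⟩
    let Λ := (LambdaOrder.toRatFunc ξ α₁ α₂).range
    ∀ lam : H, (lam ∈ Λ ∧ ∃ mu ∈ Λ, lam * mu = 1 ∧ mu * lam = 1) ↔
      lam ∈ Submonoid.closure (torsionGenerators K θ₁ θ₂) := by
  intro r H θ₁ b₀ d₀ θ₂ Λ lam
  have hξ : ¬ IsSquare ξ := fun ⟨u, hu⟩ => hns ⟨u, by rw [sq, hu]⟩
  have hinj : Function.Injective (LambdaOrder.toRatFunc ξ α₁ α₂) :=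
    quaternionMap_injective (RatFunc.algebraMap_injective K) _ _
  have hθ₁ : LambdaOrder.toRatFunc ξ α₁ α₂ (LambdaOrder.theta₁ ξ α₁ α₂) = θ₁ := by
    ext1
    · exact map_zero _
    · exact map_one _
    · exact map_zero _
    · exact map_zero _
  have hθ₂ : LambdaOrder.toRatFunc ξ α₁ α₂ (LambdaOrder.theta₂ ξ α₁ α₂) = θ₂ := by
    ext1
    · exact map_zero _
    · rfl
    · exact map_zero _
    · rfl
  rw [mem_range_and_inv_mem_range_iff hinj, ← hθ₁, ← hθ₂, ← image_torsionGenerators]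
  simp only [LambdaOrder.isUnit_iff_mem_closure_torsionGenerators hξ hα]
  rw [← MonoidHom.map_mclosure, Submonoid.mem_map]

theorem memLambda_iff_mem_range [Fintype K] {ξ α₁ α₂ : K}
    {x : ℍ[RatFunc K,RatFunc.C ξ,algebraMap K[X] (RatFunc K) ((X - C α₁) * (X - C α₂))]} :
    memLambda x ↔ x ∈ (LambdaOrder.toRatFunc ξ α₁ α₂).range := by
  rw [LambdaOrder.toRatFunc, mem_range_quaternionMap]
  rfl

end RatFunc

/-- Let `q` be an odd prime power, `ξ ∈ 𝔽_q^×` a non-square,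
`α₁ ≠ α₂ ∈ 𝔽_q`, `𝔯 = (T−α₁)(T−α₂)`, `θ₁ = i`, and `θ₂ = b₀·i + d₀·k` with
`b₀ = (2T−(α₁+α₂))/(α₁−α₂)`, `d₀ = −2/(α₁−α₂)`.  Then the group `Λˣ` of units of the
`𝔽_q[T]`-order `Λ ⊂ H(ξ,𝔯)` is generated by the elements `a + b·θ₁` and `a + b·θ₂`
with `a, b ∈ 𝔽_q` not both zero: an element of `H(ξ,𝔯)` is a unit of `Λ` if and only
if it lies in the multiplicative closure of this (inverse-closed) set of generators. -/
theorem lambda_units_generated_by_torsion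
    (Fq : Type*) [Field Fq] [Fintype Fq] (hodd : Odd (Fintype.card Fq))
    (ξ : Fq) (hξ : ξ ≠ 0) (hns : ¬ ∃ u : Fq, u ^ 2 = ξ)
    (α₁ α₂ : Fq) (hα : α₁ ≠ α₂) :
    let r : Polynomial Fq := (X - C α₁) * (X - C α₂)
    let H := ℍ[RatFunc Fq, RatFunc.C ξ, algebraMap (Polynomial Fq) (RatFunc Fq) r]
    let θ₁ : H := ⟨0, 1, 0, 0⟩
    let b₀ : Polynomial Fq := C (α₁ - α₂)⁻¹ * (2 * X - C (α₁ + α₂))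
    let d₀ : Polynomial Fq := C (-(2) * (α₁ - α₂)⁻¹)
    let θ₂ : H := ⟨0, algebraMap (Polynomial Fq) (RatFunc Fq) b₀, 0,
      algebraMap (Polynomial Fq) (RatFunc Fq) d₀⟩
    let gens : Set H := {x | ∃ a b : Fq, ¬ (a = 0 ∧ b = 0) ∧
      (x = algebraMap (RatFunc Fq) H (RatFunc.C a)
            + algebraMap (RatFunc Fq) H (RatFunc.C b) * θ₁ ∨
       x = algebraMap (RatFunc Fq) H (RatFunc.C a)
            + algebraMap (RatFunc Fq) H (RatFunc.C b) * θ₂)}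
    ∀ lam : H,
      (memLambda lam ∧ ∃ mu : H, memLambda mu ∧ lam * mu = 1 ∧ mu * lam = 1) ↔
        lam ∈ Submonoid.closure gens := by
  simp only [memLambda_iff_mem_range]
  exact lambda_units_generated_by_torsion_general Fq ξ hns α₁ α₂ hα
end
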